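/- arXiv:1603.03887 — 2 statements merged into one kernel-verified Lean document; each statement's English description precedes it below -/
import Mathlib

section
/- For every point a in the inverse limit space X there exists an embedding g : X → ℝ² such that the point g(a) is accessible from the complement of g(X). -/
/-- `T : ℝ → ℝ` is a unimodal map on `[0,1]` with critical point `c`:
continuous, maps `[0,1]` into itself, fixes `0`, strictly increasing on `[0,c]`
and strictly decreasing on `[c,1]`, with `c ∈ (0,1)`. -/
def IsUnimodal (T : ℝ → ℝ) (c : ℝ) : Prop :=
  ContinuousOn T (Set.Icc 0 1) ∧ Set.MapsTo T (Set.Icc 0 1) (Set.Icc 0 1) ∧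
    T 0 = 0 ∧ 0 < c ∧ c < 1 ∧
    StrictMonoOn T (Set.Icc 0 c) ∧ StrictAntiOn T (Set.Icc c 1)

/-- The inverse limit `X = lim←([0,1], T)`, modelled as sequences
`x : ℕ → ℝ` where `x n` represents the coordinate `x_{-n}`. -/
def invLimitSet (T : ℝ → ℝ) : Set (ℕ → ℝ) :=
  {x | (∀ n, x n ∈ Set.Icc (0 : ℝ) 1) ∧ ∀ n, T (x (n + 1)) = x n}

/-- The inverse limit space, with the (product) subspace topology, which is the
topology induced by the metric `d(x,y) = Σ_{i≤0} 2^i |x_i - y_i|`. -/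
abbrev InvLimit (T : ℝ → ℝ) : Type := ↥(invLimitSet T)

/-- A point `a` of a set `K ⊆ ℝ²` is accessible from the complement of `K` if there
is an arc in the plane with endpoint `a` meeting `K` only in `a`. -/
def Accessible (K : Set (ℝ × ℝ)) (a : ℝ × ℝ) : Prop :=
  ∃ γ : ℝ → ℝ × ℝ, ContinuousOn γ (Set.Icc 0 1) ∧ Set.InjOn γ (Set.Icc 0 1) ∧
    γ 0 = a ∧ γ '' Set.Icc 0 1 ∩ K = {a}

open Set Filter Topology

/-- One folding step: a Hénon-like injective map of the plane. -/
lemma fold_step (U : ℝ → ℝ) (hU : Continuous U) (b σ : ℝ) (hσ : σ = 1 ∨ σ = -1)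
    (hanti : StrictAntiOn (fun s => U (b + σ * s)) (Ici 0))
    (hlim : Tendsto (fun s => U (b + σ * s)) atTop atBot) (ε : ℝ) (hε : 0 < ε) :
    ∃ F : ℝ × ℝ → ℝ × ℝ, Continuous F ∧ Function.Injective F ∧
      (∀ t, F (t, 0) = (U t, σ * ε * (t - b))) ∧
      ∀ w, 0 ≤ w → ∃ y, 0 ≤ y ∧ F (b, y) = (U b, w) := by
  have hσ2 : σ * σ = 1 := by rcases hσ with h | h <;> simp [h]
  have hσ0 : σ ≠ 0 := by rcases hσ with h | h <;> simp [h]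
  let k : ℝ → ℝ := fun s => U b - U (b + σ * max s 0) + min s 0
  have hkc : Continuous k := by fun_prop
  have hkpos : ∀ s, 0 ≤ s → k s = U b - U (b + σ * s) := by
    intro s hs; simp [k, hs]
  have hkneg : ∀ s, s ≤ 0 → k s = s := by
    intro s hs; simp [k, hs]
  have hkm : StrictMono k := by
    intro s t hst
    have h1 : U (b + σ * max t 0) ≤ U (b + σ * max s 0) :=
      hanti.antitoneOn (le_max_right s 0) (le_max_right t 0) (max_le_max_right 0 hst.le)
    have h2 : min s 0 ≤ min t 0 := min_le_min_right 0 hst.le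
    rcases lt_or_ge s 0 with hs | hs
    · have h3 : min s 0 < min t 0 := by
        rw [min_eq_left hs.le]; exact lt_min hst hs
      simp only [k]; linarith
    · rw [hkpos s hs, hkpos t (hs.trans hst.le)]
      have := hanti (show s ∈ Ici (0:ℝ) from hs) (show t ∈ Ici (0:ℝ) from hs.trans hst.le) hst
      simp only at this
      linarith
  have hktop : Tendsto k atTop atTop := by
    have h1 : Tendsto (fun s => U b + -(U (b + σ * s))) atTop atTop :=
      tendsto_atTop_add_const_left _ _ (tendsto_neg_atBot_atTop.comp hlim)
    refine h1.congr' ?_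
    filter_upwards [eventually_ge_atTop 0] with s hs
    rw [hkpos s hs]; ring
  have hkbot : Tendsto k atBot atBot := by
    refine tendsto_id.congr' ?_
    filter_upwards [eventually_le_atBot 0] with s hs
    rw [hkneg s hs]; rfl
  have hks : Function.Surjective k := hkc.surjective hktop hkbot
  let e := hkm.orderIsoOfSurjective k hks
  let q : ℝ → ℝ := e.symm
  have hqc : Continuous q := e.symm.continuous
  have hqk : ∀ s, q (k s) = s := fun s => e.symm_apply_apply s
  have hq0 : q 0 = 0 := by
    have := hqk 0; rwa [hkneg 0 le_rfl] at this
  refine ⟨fun p => (U (p.1 + σ * q p.2) + p.2, σ * ε * (p.1 + σ * q p.2 - b)), ?_, ?_, ?_, ?_⟩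
  · fun_prop
  · rintro ⟨t, y⟩ ⟨t', y'⟩ h
    simp only [Prod.mk.injEq] at h
    obtain ⟨h1, h2⟩ := h
    have h3 := mul_left_cancel₀ (mul_ne_zero hσ0 hε.ne') h2
    have h4 : t + σ * q y = t' + σ * q y' := by linarith
    rw [h4] at h1
    have h5 : y = y' := by linarith
    subst h5
    simp only [Prod.mk.injEq, and_true]; linarith
  · intro t; simp [hq0]
  · intro w hw
    have hs : 0 ≤ w / ε := by positivity
    refine ⟨k (w / ε), ?_, ?_⟩
    · have := hkm.monotone hs
      rwa [hkneg 0 le_rfl] at this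
    · simp only [hqk, Prod.mk.injEq]
      constructor
      · rw [hkpos _ hs]; ring
      · have : σ * ε * (b + σ * (w / ε) - b) = (σ * σ) * (ε * (w / ε)) := by ring
        rw [this, hσ2, mul_div_cancel₀ _ hε.ne']; ring

/-- The conditions on the `n`-th approximation. -/
structure ApproxInv (U : ℝ → ℝ) (α : ℕ → ℝ) (n : ℕ) (Φ : ℝ × ℝ → ℝ × ℝ) (η : ℝ) : Prop where
  cont : Continuous Φ
  inj : Function.Injective Φ
  base : Φ (α n, 0) = (α 0, 0)
  ray : ∀ w, 0 ≤ w → ∃ y, 0 ≤ y ∧ Φ (α n, y) = (α 0, w)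
  pos : 0 < η
  sep : ∀ s ∈ Icc (0:ℝ) 1, ∀ t ∈ Icc (0:ℝ) 1, ∀ k ≤ n,
    1 / ((n:ℝ) + 1) ≤ |U^[k] s - U^[k] t| → 8 * η ≤ dist (Φ (s, 0)) (Φ (t, 0))
  away : ∀ s ∈ Icc (0:ℝ) 1, ∀ w ∈ Icc (1 / ((n:ℝ) + 1)) 1,
    8 * η ≤ dist (Φ (s, 0)) (α 0, w)

lemma compact_pos {X : Type*} [TopologicalSpace X] (K : Set X) (hK : IsCompact K) (f : X → ℝ)
    (hf : Continuous f) (hpos : ∀ x ∈ K, 0 < f x) : ∃ r, 0 < r ∧ ∀ x ∈ K, r ≤ f x := by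
  rcases K.eq_empty_or_nonempty with h | h
  · exact ⟨1, one_pos, by simp [h]⟩
  · obtain ⟨x, hx, hm⟩ := hK.exists_isMinOn h hf.continuousOn
    exact ⟨f x, hpos x hx, fun y hy => hm hy⟩

lemma exists_inv (U : ℝ → ℝ) (hU : Continuous U) (α : ℕ → ℝ) (n : ℕ) (Φ : ℝ × ℝ → ℝ × ℝ)
    (cont : Continuous Φ) (inj : Function.Injective Φ) (base : Φ (α n, 0) = (α 0, 0))
    (ray : ∀ w, 0 ≤ w → ∃ y, 0 ≤ y ∧ Φ (α n, y) = (α 0, w)) (M : ℝ) (hM : 0 < M) :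
    ∃ η, η ≤ M ∧ ApproxInv U α n Φ η := by
  have hn : (0:ℝ) < 1 / ((n:ℝ) + 1) := by positivity
  let D : ℝ × ℝ → ℝ := fun p => ∑ k ∈ Finset.range (n + 1), |U^[k] p.1 - U^[k] p.2|
  have hD : Continuous D := by
    refine continuous_finsetSum _ fun k _ => ?_
    have := hU.iterate k
    fun_prop
  obtain ⟨r1, hr1, h1⟩ := compact_pos
    ((Icc (0:ℝ) 1 ×ˢ Icc (0:ℝ) 1) ∩ {p : ℝ × ℝ | 1 / ((n:ℝ) + 1) ≤ D p})
    ((isCompact_Icc.prod isCompact_Icc).inter_right (isClosed_le continuous_const hD))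
    (fun p => dist (Φ (p.1, 0)) (Φ (p.2, 0))) (by fun_prop) (by
      rintro ⟨s, t⟩ ⟨_, h⟩
      rw [dist_pos]
      intro he
      have := inj he
      simp only [Prod.mk.injEq, and_true] at this
      subst this
      simp only [mem_ofPred_eq, D, sub_self, abs_zero, Finset.sum_const_zero] at h
      linarith)
  obtain ⟨r2, hr2, h2⟩ := compact_pos
    (Icc (0:ℝ) 1 ×ˢ Icc (1 / ((n:ℝ) + 1)) 1) (isCompact_Icc.prod isCompact_Icc)
    (fun p => dist (Φ (p.1, 0)) (α 0, p.2)) (by fun_prop) (by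
      rintro ⟨s, w⟩ ⟨_, h⟩
      rw [dist_pos]
      intro he
      simp only [mem_Icc] at h he
      obtain ⟨y, hy, hy'⟩ := ray w (by linarith [h.1])
      have h3 := inj (he.trans hy'.symm)
      simp only [Prod.mk.injEq] at h3
      rw [h3.1, base] at he
      simp only [Prod.mk.injEq] at he
      linarith [h.1, he.2])
  refine ⟨min M (min (r1 / 8) (r2 / 8)), min_le_left _ _, cont, inj, base, ray, by positivity,
    ?_, ?_⟩
  · intro s hs t ht k hk hle
    have h3 := h1 (s, t) ⟨⟨hs, ht⟩, hle.trans
      (Finset.single_le_sum (f := fun k => |U^[k] s - U^[k] t|) (fun _ _ => abs_nonneg _)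
        (Finset.mem_range.2 (by omega)))⟩
    have h4 : min M (min (r1 / 8) (r2 / 8)) ≤ r1 / 8 :=
      (min_le_right _ _).trans (min_le_left _ _)
    simp only at h3
    linarith
  · intro s hs w hw
    have h3 := h2 (s, w) ⟨hs, hw⟩
    have h4 : min M (min (r1 / 8) (r2 / 8)) ≤ r2 / 8 :=
      (min_le_right _ _).trans (min_le_right _ _)
    simp only at h3
    linarith

lemma next_inv (U : ℝ → ℝ) (c : ℝ) (hU : Continuous U) (hm : StrictMonoOn U (Iic c))
    (ha : StrictAntiOn U (Ici c)) (hbot : Tendsto U atBot atBot) (htop : Tendsto U atTop atBot)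
    (hI : MapsTo U (Icc 0 1) (Icc 0 1))
    (α : ℕ → ℝ) (hα : ∀ n, α n ∈ Icc (0:ℝ) 1) (hα' : ∀ n, U (α (n + 1)) = α n)
    (n : ℕ) (Φ : ℝ × ℝ → ℝ × ℝ) (η : ℝ) (h : ApproxInv U α n Φ η) :
    ∃ Φ' η', ApproxInv U α (n + 1) Φ' η' ∧ η' ≤ η / 2 ∧
      ∀ t ∈ Icc (0:ℝ) 1, dist (Φ' (t, 0)) (Φ (U t, 0)) ≤ η := by
  have huc := (isCompact_Icc.prod isCompact_Icc :
    IsCompact (Icc (0:ℝ) 1 ×ˢ Icc (-1:ℝ) 1)).uniformContinuousOn_of_continuous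
      h.cont.continuousOn
  rw [Metric.uniformContinuousOn_iff] at huc
  obtain ⟨δ, hδ, huc⟩ := huc η h.pos
  have hstep : ∃ σ : ℝ, (σ = 1 ∨ σ = -1) ∧
      StrictAntiOn (fun s => U (α (n+1) + σ * s)) (Ici 0) ∧
      Tendsto (fun s => U (α (n+1) + σ * s)) atTop atBot := by
    rcases le_total (α (n+1)) c with hc | hc
    · refine ⟨-1, Or.inr rfl, ?_, ?_⟩
      · intro s hs t ht hst
        simp only [mem_Ici] at hs ht
        exact hm (show _ ≤ c by linarith) (show _ ≤ c by linarith) (by linarith)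
      · refine hbot.comp (tendsto_atBot_add_const_left _ _ ?_)
        exact (tendsto_neg_atTop_atBot (G := ℝ)).congr fun s => by ring
    · refine ⟨1, Or.inl rfl, ?_, ?_⟩
      · intro s hs t ht hst
        simp only [mem_Ici] at hs ht
        exact ha (show c ≤ _ by linarith) (show c ≤ _ by linarith) (by linarith)
      · refine htop.comp (tendsto_atTop_add_const_left _ _ ?_)
        exact (tendsto_id (α := ℝ)).congr fun s => by simp
  obtain ⟨σ, hσ, h1, h2⟩ := hstep
  have hε : 0 < min 1 (δ / 2) := by positivity
  obtain ⟨F, Fc, Fi, F0, Fr⟩ := fold_step U hU _ σ hσ h1 h2 _ hε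
  obtain ⟨η', hη', hinv⟩ := exists_inv U hU α (n + 1) (Φ ∘ F) (h.cont.comp Fc) (h.inj.comp Fi)
    (by simp [F0, hα', h.base]) (by
      intro w hw
      obtain ⟨y, hy, hy'⟩ := h.ray w hw
      obtain ⟨z, hz, hz'⟩ := Fr y hy
      exact ⟨z, hz, by simp [hz', hα', hy']⟩) (η / 2) (by linarith [h.pos])
  refine ⟨Φ ∘ F, η', hinv, hη', fun t ht => ?_⟩
  have hb : |σ * min 1 (δ / 2) * (t - α (n+1))| ≤ min 1 (δ / 2) := by
    have hs : |σ| = 1 := by rcases hσ with h | h <;> simp [h]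
    have := hα (n+1)
    have h3 : |t - α (n+1)| ≤ 1 := by
      rw [abs_le]; constructor <;> linarith [ht.1, ht.2, this.1, this.2]
    rw [abs_mul, abs_mul, hs, abs_of_pos hε, one_mul]
    exact mul_le_of_le_one_right hε.le h3
  have hb1 := abs_le.1 (hb.trans (min_le_left _ _))
  refine (huc (F (t, 0)) ?_ (U t, 0) ?_ ?_).le
  · rw [F0]; exact ⟨hI ht, hb1⟩
  · exact ⟨hI ht, by simp⟩
  · rw [F0, Prod.dist_eq]
    simp only [dist_self, Real.dist_eq, sub_zero]
    refine max_lt hδ ((hb.trans (min_le_right _ _)).trans_lt (by linarith))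

lemma exists_approx (U : ℝ → ℝ) (c : ℝ) (hU : Continuous U) (hm : StrictMonoOn U (Iic c))
    (ha : StrictAntiOn U (Ici c)) (hbot : Tendsto U atBot atBot) (htop : Tendsto U atTop atBot)
    (hI : MapsTo U (Icc 0 1) (Icc 0 1))
    (α : ℕ → ℝ) (hα : ∀ n, α n ∈ Icc (0:ℝ) 1) (hα' : ∀ n, U (α (n + 1)) = α n) :
    ∃ (Φ : ℕ → ℝ × ℝ → ℝ × ℝ) (η : ℕ → ℝ), (∀ n, ApproxInv U α n (Φ n) (η n)) ∧
      (∀ n, η (n + 1) ≤ η n / 2) ∧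
      ∀ n, ∀ t ∈ Icc (0:ℝ) 1, dist (Φ (n + 1) (t, 0)) (Φ n (U t, 0)) ≤ η n := by
  obtain ⟨η0, -, h0⟩ := exists_inv U hU α 0 id continuous_id Function.injective_id rfl
    (fun w hw => ⟨w, hw, rfl⟩) 1 one_pos
  choose N E hN hE hd using next_inv U c hU hm ha hbot htop hI α hα hα'
  let f : ∀ n, {p : (ℝ × ℝ → ℝ × ℝ) × ℝ // ApproxInv U α n p.1 p.2} := fun n =>
    Nat.rec (motive := fun n => {p : (ℝ × ℝ → ℝ × ℝ) × ℝ // ApproxInv U α n p.1 p.2})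
      ⟨(id, η0), h0⟩ (fun n p => ⟨(N n _ _ p.2, E n _ _ p.2), hN n _ _ p.2⟩) n
  exact ⟨fun n => (f n).1.1, fun n => (f n).1.2, fun n => (f n).2,
    fun n => hE n _ _ (f n).2, fun n => hd n _ _ (f n).2⟩

/-- Extension of a unimodal map to the line. -/
noncomputable def extU (T : ℝ → ℝ) : ℝ → ℝ :=
  fun t => T (max 0 (min 1 t)) + min t 0 - max (t - 1) 0

lemma extU_eq (T : ℝ → ℝ) (t : ℝ) (ht : t ∈ Icc (0:ℝ) 1) : extU T t = T t := by
  simp [extU, ht.1, ht.2]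

set_option maxHeartbeats 1000000 in
theorem stmt0 (T : ℝ → ℝ) (c : ℝ) (hT : IsUnimodal T c) (a : InvLimit T) :
    ∃ g : InvLimit T → ℝ × ℝ, Topology.IsEmbedding g ∧ Accessible (Set.range g) (g a) := by
  obtain ⟨hc, hI, h0, hc0, hc1, hm, han⟩ := hT
  have hproj : ∀ t : ℝ, max 0 (min 1 t) ∈ Icc (0:ℝ) 1 := fun t =>
    ⟨le_max_left _ _, max_le zero_le_one (min_le_left _ _)⟩
  have hU : Continuous (extU T) := by
    have : Continuous (fun t : ℝ => T (max 0 (min 1 t))) :=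
      hc.comp_continuous (by fun_prop) hproj
    exact (this.add (continuous_id.min continuous_const)).sub
      ((continuous_id.sub continuous_const).max continuous_const)
  have hUm : StrictMonoOn (extU T) (Iic c) := by
    intro s hs t ht hst
    simp only [mem_Iic] at hs ht
    have e : ∀ u, u ≤ c → extU T u = T (max 0 u) + min u 0 := by
      intro u hu
      have h1 : u ≤ 1 := by linarith
      simp [extU, h1]
    rw [e s hs, e t ht]
    have h1 : T (max 0 s) ≤ T (max 0 t) :=
      hm.monotoneOn ⟨le_max_left _ _, max_le hc0.le hs⟩ ⟨le_max_left _ _, max_le hc0.le ht⟩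
        (max_le_max_left 0 hst.le)
    rcases lt_or_ge s 0 with h | h
    · have : min s 0 < min t 0 := by rw [min_eq_left h.le]; exact lt_min hst h
      linarith
    · have ht0 : 0 ≤ t := by linarith
      rw [max_eq_right h, max_eq_right ht0, min_eq_right h, min_eq_right ht0]
      have := hm ⟨h, hs⟩ ⟨ht0, ht⟩ hst
      linarith
  have hUa : StrictAntiOn (extU T) (Ici c) := by
    intro s hs t ht hst
    simp only [mem_Ici] at hs ht
    have e : ∀ u, c ≤ u → extU T u = T (min 1 u) - max (u - 1) 0 := by
      intro u hu
      have h1 : 0 ≤ u := by linarith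
      simp [extU, h1]
    rw [e s hs, e t ht]
    have h1 : T (min 1 t) ≤ T (min 1 s) :=
      han.antitoneOn ⟨le_min hc1.le hs, min_le_left _ _⟩ ⟨le_min hc1.le ht, min_le_left _ _⟩
        (min_le_min_left 1 hst.le)
    rcases lt_or_ge 1 t with h | h
    · have : max (s - 1) 0 < max (t - 1) 0 := by
        rw [max_eq_left (by linarith : (0:ℝ) ≤ t - 1)]
        exact max_lt (by linarith) (by linarith)
      linarith
    · have hs0 : s ≤ 1 := by linarith
      rw [min_eq_right h, min_eq_right hs0, max_eq_right (by linarith : t - 1 ≤ 0),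
        max_eq_right (by linarith : s - 1 ≤ 0)]
      have := han ⟨hs, hs0⟩ ⟨ht, h⟩ hst
      linarith
  have hbot : Tendsto (extU T) atBot atBot := by
    refine tendsto_atBot_mono (g := extU T) (f := fun t => 1 + t) ?_ (tendsto_atBot_add_const_left _ _ tendsto_id)
    intro t
    have := (hI (hproj t)).2
    simp only [extU]
    linarith [min_le_left t 0, le_max_right (t - 1) 0]
  have htop : Tendsto (extU T) atTop atBot := by
    refine tendsto_atBot_mono (g := extU T) (f := fun t => 2 + -t) ?_
      (tendsto_atBot_add_const_left _ _ tendsto_neg_atTop_atBot)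
    intro t
    have := (hI (hproj t)).2
    simp only [extU]
    linarith [min_le_right t 0, le_max_left (t - 1) 0]
  have hUI : MapsTo (extU T) (Icc 0 1) (Icc 0 1) := by
    intro t ht; rw [extU_eq T t ht]; exact hI ht
  have hx01 : ∀ (x : InvLimit T) n, x.1 n ∈ Icc (0:ℝ) 1 := fun x n => x.2.1 n
  have hxU : ∀ (x : InvLimit T) n, extU T (x.1 (n + 1)) = x.1 n := fun x n => by
    rw [extU_eq T _ (hx01 x _)]; exact x.2.2 n
  obtain ⟨Φ, η, hinv, hη, hd⟩ := exists_approx (extU T) c hU hUm hUa hbot htop hUI a.1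
    (hx01 a) (hxU a)
  have hit : ∀ (x : InvLimit T) k j, (extU T)^[j] (x.1 (k + j)) = x.1 k := by
    intro x k j
    induction j with
    | zero => rfl
    | succ j ih => rw [Function.iterate_succ_apply, ← add_assoc, hxU, ih]
  have hdist : ∀ (x : InvLimit T) n j,
      dist (Φ (n + j) (x.1 (n + j), 0)) (Φ n (x.1 n, 0)) ≤ 2 * η n - 2 * η (n + j) := by
    intro x n j
    induction j with
    | zero => simp
    | succ j ih =>
      have h1 := hd (n + j) _ (hx01 x (n + j + 1))
      rw [hxU] at h1
      have h2 := hη (n + j)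
      have h3 := dist_triangle (Φ (n + j + 1) (x.1 (n + j + 1), 0)) (Φ (n + j) (x.1 (n + j), 0))
        (Φ n (x.1 n, 0))
      rw [← add_assoc]
      linarith
  have hηle : ∀ n, η n ≤ η 0 * (1 / 2) ^ n := by
    intro n
    induction n with
    | zero => simp
    | succ n ih => rw [pow_succ]; linarith [hη n]
  have hηlim : Tendsto (fun n => 2 * η n) atTop (𝓝 0) := by
    have h1 : Tendsto η atTop (𝓝 0) := by
      refine squeeze_zero (fun n => (hinv n).pos.le) hηle ?_
      simpa using (tendsto_pow_atTop_nhds_zero_of_lt_one (by norm_num : (0:ℝ) ≤ 1 / 2)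
        (by norm_num)).const_mul (η 0)
    simpa using h1.const_mul 2
  have hcau : ∀ x : InvLimit T, ∃ l, Tendsto (fun n => Φ n (x.1 n, 0)) atTop (𝓝 l) := by
    intro x
    refine cauchySeq_tendsto_of_complete (cauchySeq_of_le_tendsto_0' _ ?_ hηlim)
    intro n m hnm
    obtain ⟨j, rfl⟩ := Nat.exists_eq_add_of_le hnm
    rw [dist_comm]
    linarith [hdist x n j, (hinv (n + j)).pos]
  choose g hg using hcau
  have hgd : ∀ x n, dist (g x) (Φ n (x.1 n, 0)) ≤ 2 * η n := by
    intro x n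
    refine le_of_tendsto ((hg x).dist tendsto_const_nhds) ?_
    filter_upwards [eventually_ge_atTop n] with m hnm
    obtain ⟨j, rfl⟩ := Nat.exists_eq_add_of_le hnm
    linarith [hdist x n j, (hinv (n + j)).pos]
  have hgc : Continuous g := by
    have hu : TendstoUniformly (fun n (x : InvLimit T) => Φ n (x.1 n, 0)) g atTop := by
      rw [Metric.tendstoUniformly_iff]
      intro ε hε
      filter_upwards [hηlim.eventually_lt_const hε] with n hn x
      exact (hgd x n).trans_lt hn
    refine hu.continuous (Frequently.of_forall fun n => (hinv n).cont.comp ?_)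
    exact ((continuous_apply n).comp continuous_subtype_val).prodMk continuous_const
  have hgi : Function.Injective g := by
    intro x y hxy
    by_contra hne
    obtain ⟨k, hk⟩ : ∃ k, x.1 k ≠ y.1 k := by
      by_contra! hcon
      exact hne (Subtype.ext (funext hcon))
    obtain ⟨m, hm'⟩ := exists_nat_one_div_lt (abs_pos.2 (sub_ne_zero.2 hk))
    have hle : 1 / (((k + m : ℕ) : ℝ) + 1) ≤ |x.1 k - y.1 k| := by
      refine le_trans ?_ hm'.le
      apply one_div_le_one_div_of_le (by positivity)
      push_cast
      linarith [(Nat.cast_nonneg k : (0:ℝ) ≤ k)]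
    have h1 := (hinv (k + m)).sep _ (hx01 x _) _ (hx01 y _) m (by omega)
      (by rw [hit, hit]; exact hle)
    have h2 := hgd x (k + m)
    have h3 := hgd y (k + m)
    rw [← hxy] at h3
    have h4 := dist_triangle_left (Φ (k + m) (x.1 (k + m), 0)) (Φ (k + m) (y.1 (k + m), 0)) (g x)
    linarith [(hinv (k + m)).pos]
  have hcs : CompactSpace (InvLimit T) := by
    rw [← isCompact_iff_compactSpace]
    have he : invLimitSet T = Set.pi univ (fun _ : ℕ => Icc (0:ℝ) 1) ∩
        ⋂ n, {x : ℕ → ℝ | extU T (x (n + 1)) = x n} := by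
      ext x
      simp only [invLimitSet, mem_ofPred_eq, mem_inter_iff, Set.mem_pi, mem_univ, true_imp_iff,
        mem_iInter]
      refine and_congr_right fun hx => forall_congr' fun n => ?_
      rw [extU_eq T _ (hx _)]
    rw [he]
    refine (isCompact_univ_pi fun _ => isCompact_Icc).inter_right (isClosed_iInter fun n => ?_)
    exact isClosed_eq (hU.comp (continuous_apply _)) (continuous_apply _)
  have hga : g a = (a.1 0, 0) := by
    refine tendsto_nhds_unique (hg a) ?_
    exact tendsto_const_nhds.congr fun n => (hinv n).base.symm
  refine ⟨g, (hgc.isClosedEmbedding hgi).isEmbedding, fun t => (a.1 0, t), by fun_prop, ?_,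
    hga.symm, ?_⟩
  · intro s _ t _ h
    simpa using h
  · apply Subset.antisymm
    · rintro _ ⟨⟨w, hw, rfl⟩, ⟨x, hx⟩⟩
      rcases hw.1.eq_or_lt with h | h
      · simp [hga, ← h]
      · exfalso
        obtain ⟨m, hm'⟩ := exists_nat_one_div_lt h
        have h1 := (hinv m).away _ (hx01 x m) w ⟨hm'.le, hw.2⟩
        have h2 := hgd x m
        rw [hx, dist_comm] at h2
        linarith [(hinv m).pos]
    · rintro _ rfl
      exact ⟨⟨0, by simp, hga.symm⟩, ⟨a, rfl⟩⟩
end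

section
/- If T is a unimodal interval map with h_top(T)>0, then there exist uncountably many pairwise non-equivalent embeddings of X into the plane, i.e., an uncountable family of embeddings of X into ℝ² such that no two members of the family are equivalent. -/
/-- Two planar embeddings `g₁, g₂` of a space `A` are equivalent if some homeomorphism
of the plane maps the image of `g₁` onto the image of `g₂` (equivalently, there is a
homeomorphism between the images extending to a homeomorphism of the plane). -/
def EquivalentEmbeddings {A : Type*} (g₁ g₂ : A → ℝ × ℝ) : Prop :=
  ∃ H : (ℝ × ℝ) ≃ₜ (ℝ × ℝ), H '' Set.range g₁ = Set.range g₂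


section Entropy
open Set Filter

def LapOn (T : ℝ → ℝ) (n : ℕ) (S : Set ℝ) : Prop :=
  ∀ k < n, MonotoneOn T^[k] S ∨ AntitoneOn T^[k] S

def LapCov (T : ℝ → ℝ) (n : ℕ) (J : Set ℝ) (L : ℕ) : Prop :=
  ∃ p : ℝ → ℕ, (∀ x ∈ J, p x < L) ∧ ∀ i, LapOn T n (J ∩ p ⁻¹' {i})

lemma LapOn.mono_set {T : ℝ → ℝ} {n : ℕ} {S S' : Set ℝ} (h : LapOn T n S) (hs : S' ⊆ S) :
    LapOn T n S' := fun k hk => (h k hk).imp (fun h => h.mono hs) (fun h => h.mono hs)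

lemma LapCov.mono_set {T : ℝ → ℝ} {n L : ℕ} {S S' : Set ℝ} (h : LapCov T n S L) (hs : S' ⊆ S) :
    LapCov T n S' L := by
  obtain ⟨p, hp, h⟩ := h
  exact ⟨p, fun x hx => hp x (hs hx), fun i => (h i).mono_set (inter_subset_inter_left _ hs)⟩

lemma LapCov.pull {T : ℝ → ℝ} {n L : ℕ} {J J' : Set ℝ} (h : LapCov T n J' L)
    (hT : MonotoneOn T J ∨ AntitoneOn T J) (hm : MapsTo T J J') : LapCov T (n+1) J L := by
  obtain ⟨p, hp, h⟩ := h
  refine ⟨p ∘ T, fun x hx => hp _ (hm hx), fun i k hk => ?_⟩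
  have hm' : MapsTo T (J ∩ (p ∘ T) ⁻¹' {i}) (J' ∩ p ⁻¹' {i}) := fun x hx => ⟨hm hx.1, hx.2⟩
  have hsub : (J ∩ (p ∘ T) ⁻¹' {i}) ⊆ J := inter_subset_left
  cases k with
  | zero => left; simpa using monotoneOn_id
  | succ k =>
    rw [Function.iterate_succ]
    rcases h i k (by omega) with h1 | h1 <;> rcases hT with h2 | h2
    · exact Or.inl (h1.comp (h2.mono hsub) hm')
    · exact Or.inr fun x hx y hy hxy => h1 (hm' hy) (hm' hx) (h2 hx.1 hy.1 hxy)
    · exact Or.inr fun x hx y hy hxy => h1 (hm' hx) (hm' hy) (h2 hx.1 hy.1 hxy)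
    · exact Or.inl (h1.comp (h2.mono hsub) hm')

lemma LapCov.union {T : ℝ → ℝ} {n L L' : ℕ} {J J' : Set ℝ} (h : LapCov T n J L)
    (h' : LapCov T n J' L') : LapCov T n (J ∪ J') (L + L') := by
  classical
  obtain ⟨p, hp, h⟩ := h
  obtain ⟨p', hp', h'⟩ := h'
  refine ⟨fun x => if x ∈ J then p x else L + p' x, ?_, ?_⟩
  · intro x hx
    by_cases hJ : x ∈ J
    · simp only [hJ, if_true]; have := hp x hJ; omega
    · simp only [hJ, if_false]; have := hp' x (hx.resolve_left hJ); omega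
  · intro i
    by_cases hi : i < L
    · refine (h i).mono_set ?_
      rintro x ⟨hx, hxi⟩
      simp only [mem_preimage, mem_singleton_iff] at hxi
      split_ifs at hxi with hJ
      · exact ⟨hJ, hxi⟩
      · omega
    · refine (h' (i - L)).mono_set ?_
      rintro x ⟨hx, hxi⟩
      simp only [mem_preimage, mem_singleton_iff] at hxi
      split_ifs at hxi with hJ
      · have := hp x hJ; omega
      · exact ⟨hx.resolve_left hJ, by simp; omega⟩

lemma LapCov.zero (T : ℝ → ℝ) (J : Set ℝ) : LapCov T 0 J 1 :=
  ⟨fun _ => 0, fun _ _ => by simp, fun _ k hk => by omega⟩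

lemma LapCov.le {T : ℝ → ℝ} {n L L' : ℕ} {J : Set ℝ} (h : LapCov T n J L)
    (h' : L ≤ L') : LapCov T n J L' := by
  obtain ⟨p, hp, h⟩ := h
  exact ⟨p, fun x hx => (hp x hx).trans_le h', h⟩

lemma LapCov.dynCover {T : ℝ → ℝ} {n L K : ℕ} (hK : 0 < K) (hm : MapsTo T (Icc 0 1) (Icc 0 1))
    (h : LapCov T n (Icc 0 1) L) :
    ∃ s : Finset ℝ, Dynamics.IsDynCoverOf T (Icc 0 1) {p | dist p.1 p.2 ≤ 1/(K:ℝ)} n s ∧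
      s.card ≤ L * (2 * (n * K) + 1) := by
  classical
  obtain ⟨p, hp, h⟩ := h
  let sg : ℕ → ℕ → ℤ := fun i k => if MonotoneOn T^[k] (Icc 0 1 ∩ p ⁻¹' {i}) then 1 else -1
  let f : ℝ → ℕ × ℤ := fun x => (p x, ∑ k ∈ Finset.range n, sg (p x) k * ⌊K * T^[k] x⌋)
  have hK' : (0:ℝ) < K := by exact_mod_cast hK
  have hsg : ∀ i k, |sg i k| = 1 := by intro i k; simp only [sg]; split_ifs <;> simp
  have hT : ∀ x ∈ Icc (0:ℝ) 1, ∀ k, T^[k] x ∈ Icc (0:ℝ) 1 := fun x hx k => hm.iterate k hx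
  let t : Finset (ℕ × ℤ) := Finset.range L ×ˢ Finset.Icc (-(n*K:ℤ)) (n*K)
  have hft : ∀ x ∈ Icc (0:ℝ) 1, f x ∈ t := by
    intro x hx
    simp only [f, t, Finset.mem_product, Finset.mem_range, Finset.mem_Icc]
    refine ⟨hp x hx, ?_⟩
    rw [← abs_le]
    refine (Finset.abs_sum_le_sum_abs _ _).trans ?_
    refine (Finset.sum_le_card_nsmul _ _ (K:ℤ) ?_).trans ?_
    · intro k _
      rw [abs_mul, hsg, one_mul]
      have h1 := hT x hx k
      have : 0 ≤ ⌊K * T^[k] x⌋ := Int.floor_nonneg.2 (mul_nonneg hK'.le h1.1)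
      rw [abs_of_nonneg this]
      have : (⌊K * T^[k] x⌋ : ℝ) ≤ K := (Int.floor_le _).trans (by nlinarith [h1.2])
      exact_mod_cast this
    · simp
  have hle : ∀ x ∈ Icc (0:ℝ) 1, ∀ y ∈ Icc (0:ℝ) 1, x ≤ y → f x = f y →
      ∀ k < n, dist (T^[k] x) (T^[k] y) ≤ 1/(K:ℝ) := by
    intro x hx y hy hxy hf k hk
    simp only [f, Prod.mk.injEq] at hf
    obtain ⟨hpx, hs⟩ := hf
    rw [← hpx] at hs
    have hx' : x ∈ Icc (0:ℝ) 1 ∩ p ⁻¹' {p x} := ⟨hx, rfl⟩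
    have hy' : y ∈ Icc (0:ℝ) 1 ∩ p ⁻¹' {p x} := ⟨hy, hpx.symm⟩
    have hterm : ∀ k ∈ Finset.range n, sg (p x) k * ⌊K * T^[k] x⌋ ≤ sg (p x) k * ⌊K * T^[k] y⌋ := by
      intro k hk
      simp only [sg]
      split_ifs with hmo
      · have := hmo hx' hy' hxy
        rw [one_mul, one_mul]; exact Int.floor_mono (by gcongr)
      · have := ((h (p x) k (Finset.mem_range.1 hk)).resolve_left hmo) hx' hy' hxy
        have : ⌊K * T^[k] y⌋ ≤ ⌊K * T^[k] x⌋ := Int.floor_mono (by gcongr)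
        linarith
    have := (Finset.sum_eq_sum_iff_of_le hterm).1 hs k (Finset.mem_range.2 hk)
    have h0 : sg (p x) k ≠ 0 := by intro h0; have := hsg (p x) k; rw [h0] at this; simp at this
    have hfl := mul_left_cancel₀ h0 this
    have := Int.abs_sub_lt_one_of_floor_eq_floor hfl
    rw [← mul_sub, abs_mul, abs_of_pos hK'] at this
    rw [Real.dist_eq, le_div_iff₀ hK']
    linarith
  have hcl : ∀ x ∈ Icc (0:ℝ) 1, ∀ y ∈ Icc (0:ℝ) 1, f x = f y →
      ∀ k < n, dist (T^[k] x) (T^[k] y) ≤ 1/(K:ℝ) := by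
    intro x hx y hy hf k hk
    rcases le_total x y with h | h
    · exact hle x hx y hy h hf k hk
    · rw [dist_comm]; exact hle y hy x hx h hf.symm k hk
  let r : ℕ × ℤ → ℝ := fun a => if h : ∃ x ∈ Icc (0:ℝ) 1, f x = a then h.choose else 0
  refine ⟨t.image r, ?_, ?_⟩
  · intro x hx
    have hex : ∃ y ∈ Icc (0:ℝ) 1, f y = f x := ⟨x, hx, rfl⟩
    refine ⟨r (f x), by simpa using ⟨_, _, hft x hx, rfl⟩, ?_⟩
    simp only [r, hex, dif_pos]
    obtain ⟨h1, h2⟩ := hex.choose_spec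
    show (x, _) ∈ _
    rw [Dynamics.mem_dynEntourage]
    intro k hk
    exact hcl x hx _ h1 h2.symm k hk
  · refine Finset.card_image_le.trans ?_
    simp only [t, Finset.card_product, Finset.card_range, Int.card_Icc]
    gcongr
    rw [Int.toNat_le]
    push_cast; linarith

lemma entropy_le_zero {T : ℝ → ℝ} (hm : MapsTo T (Icc 0 1) (Icc 0 1))
    (h : ∀ n, LapCov T n (Icc 0 1) (2 * n + 4)) : Dynamics.coverEntropy T (Icc 0 1) ≤ 0 := by
  have hb : (uniformity ℝ).HasBasis (fun K : ℕ => 0 < K)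
      (fun K : ℕ => {p : ℝ × ℝ | dist p.1 p.2 ≤ 1/(K:ℝ)}) := by
    refine Metric.mk_uniformity_basis_le (fun K hK => by positivity) ?_
    intro ε hε
    obtain ⟨n, hn⟩ := exists_nat_one_div_lt hε
    exact ⟨n+1, by omega, by push_cast; exact hn.le⟩
  rw [Dynamics.coverEntropy_eq_iSup_basis hb]
  refine iSup₂_le fun K hK => ?_
  rw [Dynamics.coverEntropyEntourage, ← EReal.le_of_forall_lt_iff_le]
  intro a ha
  have ha' : 0 < a := by exact_mod_cast ha
  refine Eventually.expGrowthSup_le ?_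
  have hlim : Tendsto (fun n : ℕ => ((n:ℝ)^2) / Real.exp (a * n)) atTop (nhds 0) := by
    have := Real.tendsto_pow_mul_exp_neg_atTop_nhds_zero 2
    have h2 := this.comp ((tendsto_natCast_atTop_atTop (R := ℝ)).const_mul_atTop ha')
    have h3 := h2.const_mul (1/a^2)
    rw [mul_zero] at h3
    refine h3.congr fun n => ?_
    simp only [Function.comp, Real.exp_neg]
    field_simp
  have h1 : ∀ᶠ n : ℕ in atTop, ((n:ℝ)^2) / Real.exp (a * n) < 1 / (6 * (2 * K + 1)) :=
    hlim.eventually_lt_const (by positivity)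
  filter_upwards [h1, eventually_ge_atTop 1] with n hn hn1
  obtain ⟨s, hs, hc⟩ := (h n).dynCover hK hm
  have h2 := hs.coverMincard_le_card
  have h3 : (s.card : ℝ) ≤ Real.exp (a * n) := by
    have : (s.card : ℝ) ≤ (2 * n + 4) * (2 * (n * K) + 1) := by exact_mod_cast hc
    have hn1' : (1:ℝ) ≤ n := by exact_mod_cast hn1
    rw [div_lt_div_iff₀ (Real.exp_pos _) (by positivity)] at hn
    have h5 : (2 * (n:ℝ) + 4) * (2 * (n * K) + 1) ≤ 6 * n * (n * (2 * K + 1)) := by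
      have : (0:ℝ) ≤ K := by positivity
      apply mul_le_mul <;> nlinarith [mul_nonneg this (by linarith : (0:ℝ) ≤ n)]
    nlinarith
  have h4 : EReal.exp ((a:EReal) * (n:EReal)) = ENNReal.ofReal (Real.exp (a * n)) := by
    rw [← EReal.exp_coe]; norm_cast
  rw [h4]
  calc ((Dynamics.coverMincard T (Icc 0 1) {p | dist p.1 p.2 ≤ 1/(K:ℝ)} n : ℕ∞) : ENNReal)
      ≤ ((s.card : ℕ∞) : ENNReal) := by exact_mod_cast h2
    _ = ENNReal.ofReal (s.card) := by simp
    _ ≤ _ := ENNReal.ofReal_le_ofReal h3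

lemma IsUnimodal.le_c1 {T : ℝ → ℝ} {c : ℝ} (hT : IsUnimodal T c) {x : ℝ} (hx : x ∈ Icc (0:ℝ) 1) :
    T x ≤ T c := by
  obtain ⟨_, _, _, hc0, hc1, hmo, han⟩ := hT
  rcases le_total x c with h | h
  · exact hmo.monotoneOn ⟨hx.1, h⟩ ⟨hc0.le, le_rfl⟩ h
  · exact han.antitoneOn ⟨le_rfl, hc1.le⟩ ⟨h, hx.2⟩ h

lemma entropy_pos {T : ℝ → ℝ} {c : ℝ} (hT : IsUnimodal T c)
    (hent : 0 < Dynamics.coverEntropy T (Icc 0 1)) : c < T c ∧ T (T c) < c := by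
  have hle := fun x hx => hT.le_c1 (x := x) hx
  obtain ⟨_, hm, _, hc0, hc1, hmo, han⟩ := hT
  have hcI : c ∈ Icc (0:ℝ) 1 := ⟨hc0.le, hc1.le⟩
  have hun : Icc (0:ℝ) 1 = Icc 0 c ∪ Icc c 1 := (Icc_union_Icc_eq_Icc hc0.le hc1.le).symm
  by_contra hcon
  refine absurd hent (not_lt.2 (entropy_le_zero hm ?_))
  have hT1 : MonotoneOn T (Icc 0 c) ∨ AntitoneOn T (Icc 0 c) := Or.inl hmo.monotoneOn
  have hT2 : MonotoneOn T (Icc c 1) ∨ AntitoneOn T (Icc c 1) := Or.inr han.antitoneOn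
  by_cases h1 : T c ≤ c
  · have hm' : ∀ x ∈ Icc (0:ℝ) 1, T x ∈ Icc 0 c := fun x hx => ⟨(hm hx).1, (hle x hx).trans h1⟩
    have hL : ∀ n, LapCov T n (Icc 0 c) 1 := by
      intro n
      induction n with
      | zero => exact LapCov.zero _ _
      | succ n ih => exact ih.pull hT1 (fun x hx => hm' x (hun ▸ Or.inl hx))
    have hR : ∀ n, LapCov T n (Icc c 1) 1 := by
      intro n
      cases n with
      | zero => exact LapCov.zero _ _
      | succ n => exact (hL n).pull hT2 (fun x hx => hm' x (hun ▸ Or.inr hx))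
    intro n
    rw [hun]; exact ((hL n).union (hR n)).le (by omega)
  · push Not at h1
    have h2 : c ≤ T (T c) := by
      by_contra h; exact hcon ⟨h1, not_le.1 h⟩
    have hTc := hm hcI
    have hM : ∀ n, LapCov T n (Icc c (T c)) 1 := by
      intro n
      induction n with
      | zero => exact LapCov.zero _ _
      | succ n ih =>
        refine ih.pull (Or.inr (han.antitoneOn.mono (Icc_subset_Icc_right hTc.2))) ?_
        intro x hx
        have hx1 : x ≤ 1 := hx.2.trans hTc.2
        exact ⟨h2.trans (han.antitoneOn ⟨hx.1, hx1⟩ ⟨h1.le, hTc.2⟩ hx.2),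
          hle x ⟨hc0.le.trans hx.1, hx1⟩⟩
    have hL : ∀ n, LapCov T n (Icc 0 c) (n+1) := by
      intro n
      induction n with
      | zero => exact LapCov.zero _ _
      | succ n ih =>
        refine (ih.union (hM n)).pull hT1 ?_
        intro x hx
        have hx' : x ∈ Icc (0:ℝ) 1 := ⟨hx.1, hx.2.trans hc1.le⟩
        rcases le_total (T x) c with h | h
        · exact Or.inl ⟨(hm hx').1, h⟩
        · exact Or.inr ⟨h, hle x hx'⟩
    have hR : ∀ n, LapCov T n (Icc c 1) (n+1) := by
      intro n
      cases n with
      | zero => exact LapCov.zero _ _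
      | succ n =>
        refine ((hL n).union (hM n)).pull hT2 ?_
        intro x hx
        have hx' : x ∈ Icc (0:ℝ) 1 := ⟨hc0.le.trans hx.1, hx.2⟩
        rcases le_total (T x) c with h | h
        · exact Or.inl ⟨(hm hx').1, h⟩
        · exact Or.inr ⟨h, hle x hx'⟩
    intro n
    rw [hun]; exact ((hL n).union (hR n)).le (by omega)

end Entropy


section Ray
open Set Filter Topology

structure UData (T : ℝ → ℝ) (c y1 y2 : ℝ) : Prop where
  hT : IsUnimodal T c
  hc1 : c < T c
  hc2 : T (T c) < c
  y1pos : 0 < y1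
  y1c : y1 < c
  cy2 : c < y2
  Ty1 : T y1 = y2
  Ty2 : T y2 = y1

variable {T : ℝ → ℝ} {c y1 y2 : ℝ}

lemma UData.exists {T : ℝ → ℝ} {c : ℝ} (hT : IsUnimodal T c) (hc1 : c < T c) (hc2 : T (T c) < c) :
    ∃ y1 y2, UData T c y1 y2 := by
  have hT' := hT
  obtain ⟨hcont, hm, h0, hc0, hc1', hmo, han⟩ := hT
  have hcI : c ∈ Icc (0:ℝ) 1 := ⟨hc0.le, hc1'.le⟩
  have hTc := hm hcI
  obtain ⟨q, hq, hqf⟩ : ∃ q ∈ Icc c (T c), T q - q = 0 := by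
    have : ContinuousOn (fun x => T x - x) (Icc c (T c)) :=
      (hcont.mono (Icc_subset_Icc hc0.le hTc.2)).sub continuousOn_id
    exact intermediate_value_Icc' hc1.le this ⟨by linarith, by linarith⟩
  have hqc : c < q := lt_of_le_of_ne hq.1 (by rintro rfl; linarith)
  have hqc1 : q < T c := lt_of_le_of_ne hq.2 (by rintro rfl; linarith)
  obtain ⟨q', hq', hqq⟩ : ∃ q' ∈ Icc 0 c, T q' = q := by
    have : ContinuousOn T (Icc 0 c) := hcont.mono (Icc_subset_Icc le_rfl hc1'.le)
    exact intermediate_value_Icc hc0.le this ⟨by linarith, by linarith⟩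
  have hq0 : 0 < q' := lt_of_le_of_ne hq'.1 (by rintro rfl; linarith)
  have hq'c : q' < c := lt_of_le_of_ne hq'.2 (by rintro rfl; linarith)
  obtain ⟨y, hy, hyf⟩ : ∃ y ∈ Icc q' c, T (T y) - y = 0 := by
    have h1 : ContinuousOn T (Icc q' c) := hcont.mono (Icc_subset_Icc hq0.le hc1'.le)
    have h2 : ContinuousOn (fun x => T (T x) - x) (Icc q' c) :=
      (hcont.comp h1 (fun x hx => hm ⟨hq0.le.trans hx.1, hx.2.trans hc1'.le⟩)).sub continuousOn_id
    refine intermediate_value_Icc' hq'c.le h2 ⟨by linarith, ?_⟩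
    rw [hqq]; linarith
  have hyc : y < c := lt_of_le_of_ne hy.2 (by rintro rfl; linarith)
  have h3 : q ≤ T y := by
    rw [← hqq]; exact hmo.monotoneOn ⟨hq0.le, hq'c.le⟩ ⟨hq0.le.trans hy.1, hy.2⟩ hy.1
  exact ⟨y, T y, hT', hc1, hc2, by linarith [hy.1], hyc, by linarith, rfl, by linarith⟩

namespace UData

lemma cont (D : UData T c y1 y2) : ContinuousOn T (Icc 0 1) := D.hT.1
lemma maps (D : UData T c y1 y2) : MapsTo T (Icc 0 1) (Icc 0 1) := D.hT.2.1
lemma T0 (D : UData T c y1 y2) : T 0 = 0 := D.hT.2.2.1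
lemma c0 (D : UData T c y1 y2) : 0 < c := D.hT.2.2.2.1
lemma clt (D : UData T c y1 y2) : c < 1 := D.hT.2.2.2.2.1
lemma mo (D : UData T c y1 y2) : StrictMonoOn T (Icc 0 c) := D.hT.2.2.2.2.2.1
lemma an (D : UData T c y1 y2) : StrictAntiOn T (Icc c 1) := D.hT.2.2.2.2.2.2
lemma c1le (D : UData T c y1 y2) : T c ≤ 1 := (D.maps ⟨D.c0.le, D.clt.le⟩).2
lemma le1 (D : UData T c y1 y2) {x : ℝ} (hx : x ∈ Icc (0:ℝ) 1) : T x ≤ T c := D.hT.le_c1 hx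
lemma c1pos (D : UData T c y1 y2) : 0 < T c := D.c0.trans D.hc1

lemma mem (x : InvLimit T) (n : ℕ) : x.1 n ∈ Icc (0:ℝ) 1 := x.2.1 n
lemma nn (x : InvLimit T) (n : ℕ) : 0 ≤ x.1 n := (x.2.1 n).1
lemma step (x : InvLimit T) (n : ℕ) : T (x.1 (n+1)) = x.1 n := x.2.2 n
lemma iter (x : InvLimit T) (n k : ℕ) : T^[k] (x.1 (n+k)) = x.1 n := by
  induction k generalizing n with
  | zero => simp
  | succ k ih => rw [Function.iterate_succ, Function.comp, ← add_assoc, step x, ih]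
lemma lec1 (D : UData T c y1 y2) (x : InvLimit T) (n : ℕ) : x.1 n ≤ T c := by
  rw [← step x n]; exact D.le1 (mem x _)
lemma contCoord (n : ℕ) : Continuous (fun x : InvLimit T => x.1 n) :=
  (continuous_apply n).comp continuous_subtype_val

end UData

/-- points whose coordinates beyond `n` are on the left branch -/
def InP (T : ℝ → ℝ) (c : ℝ) (n : ℕ) (x : InvLimit T) : Prop := ∀ m > n, x.1 m ≤ c

namespace UData

lemma InP_mono {x : InvLimit T} {n m : ℕ} (h : InP T c n x) (hnm : n ≤ m) : InP T c m x :=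
  fun k hk => h k (by omega)


lemma isClosed_X (D : UData T c y1 y2) : IsClosed (invLimitSet T) := by
  have : invLimitSet T = {x | ∀ n, x n ∈ Icc (0:ℝ) 1} ∩
      {x | ∀ n, IccExtend zero_le_one ((Icc (0:ℝ) 1).domRestrict T) (x (n+1)) = x n} := by
    ext x
    simp only [invLimitSet, mem_ofPred_eq, mem_inter_iff]
    refine and_congr_right fun h => forall_congr' fun n => ?_
    rw [IccExtend_of_mem _ _ (h (n+1))]; rfl
  rw [this]
  have hc : Continuous (IccExtend (zero_le_one (α := ℝ)) ((Icc (0:ℝ) 1).domRestrict T)) :=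
    (continuousOn_iff_continuous_domRestrict.1 D.cont).Icc_extend'
  refine IsClosed.inter ?_ ?_
  · simp only [ofPred_forall]
    exact isClosed_iInter fun n => isClosed_Icc.preimage (continuous_apply n)
  · simp only [ofPred_forall]
    exact isClosed_iInter fun n =>
      isClosed_eq (hc.comp (continuous_apply _)) (continuous_apply n)

lemma compactX (D : UData T c y1 y2) : CompactSpace (InvLimit T) := by
  rw [← isCompact_iff_compactSpace]
  refine (isCompact_univ_pi (fun _ : ℕ => isCompact_Icc (a := (0:ℝ)) (b := 1))).of_isClosed_subset
    D.isClosed_X ?_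
  intro x hx n _
  exact hx.1 n

lemma InP_lt (D : UData T c y1 y2) {x y : InvLimit T} {n : ℕ} (hx : InP T c n x) (hy : InP T c n y) (k : ℕ) :
    x.1 (n+k) < y.1 (n+k) ↔ x.1 n < y.1 n := by
  induction k with
  | zero => simp
  | succ k ih =>
    rw [← ih, ← step x (n+k), ← step y (n+k)]
    exact (D.mo.lt_iff_lt ⟨nn x _, hx _ (by omega)⟩ ⟨nn y _, hy _ (by omega)⟩).symm

lemma InP_inj (D : UData T c y1 y2) {x y : InvLimit T} {n : ℕ} (hx : InP T c n x) (hy : InP T c n y)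
    (h : x.1 n = y.1 n) : x = y := by
  have h1 : ∀ k, x.1 (n+k) = y.1 (n+k) := by
    intro k
    rcases lt_trichotomy (x.1 (n+k)) (y.1 (n+k)) with h2 | h2 | h2
    · rw [D.InP_lt hx hy] at h2; linarith
    · exact h2
    · rw [D.InP_lt hy hx] at h2; linarith
  ext m
  rw [← iter x m n, ← iter y m n, add_comm m n, h1]

/-- the general chart lemma -/
lemma chart (D : UData T c y1 y2) (p : ℝ) (hp : p ∈ Icc 0 c) (hpf : T p = p) (s : ℕ → Prop)
    (hs : ∀ m, s m ∨ T (T c) ≤ p) (n : ℕ) :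
    ∃ b : ℝ → InvLimit T, Continuous b ∧ ∀ v ∈ Icc p (T c), (b v).1 n = v ∧
      ∀ m > n, p ≤ (b v).1 m ∧ (s m → (b v).1 m ≤ c) ∧ (¬ s m → c ≤ (b v).1 m) := by
  classical
  have hpc1 : p ≤ T c := hp.2.trans D.hc1.le
  have hbr : ∀ (m : ℕ) (v : ℝ), ∃ u, v ∈ Icc p (T c) →
      u ∈ Icc p (T c) ∧ T u = v ∧ (s m → u ≤ c) ∧ (¬ s m → c ≤ u) := by
    intro m v
    by_cases hv : v ∈ Icc p (T c)
    · by_cases hsm : s m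
      · have : ContinuousOn T (Icc p c) := D.cont.mono (Icc_subset_Icc hp.1 D.clt.le)
        obtain ⟨u, hu, huv⟩ := intermediate_value_Icc hp.2 this (show v ∈ Icc (T p) (T c) by
          rwa [hpf])
        exact ⟨u, fun _ => ⟨⟨hu.1, hu.2.trans D.hc1.le⟩, huv, fun _ => hu.2, fun h => absurd hsm h⟩⟩
      · have : ContinuousOn T (Icc c (T c)) := D.cont.mono (Icc_subset_Icc D.c0.le D.c1le)
        have h2 := (hs m).resolve_left hsm
        obtain ⟨u, hu, huv⟩ := intermediate_value_Icc' D.hc1.le this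
          (show v ∈ Icc (T (T c)) (T c) from ⟨h2.trans hv.1, hv.2⟩)
        exact ⟨u, fun _ => ⟨⟨hp.2.trans hu.1, hu.2⟩, huv, fun h => absurd h hsm, fun _ => hu.1⟩⟩
    · exact ⟨0, fun h => absurd h hv⟩
  choose br hbr using hbr
  let Q : Set (InvLimit T) := {y | y.1 n ∈ Icc p (T c) ∧
    ∀ m > n, p ≤ y.1 m ∧ (s m → y.1 m ≤ c) ∧ (¬ s m → c ≤ y.1 m)}
  have hsurj : ∀ v ∈ Icc p (T c), ∃ y ∈ Q, y.1 n = v := by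
    intro v hv
    let w : ℕ → ℝ := fun k => Nat.rec v (fun j u => br (n+j+1) u) k
    have hw0 : w 0 = v := rfl
    have hws : ∀ k, w (k+1) = br (n+k+1) (w k) := fun k => rfl
    have hwI : ∀ k, w k ∈ Icc p (T c) := by
      intro k
      induction k with
      | zero => exact hv
      | succ k ih => rw [hws]; exact (hbr _ _ ih).1
    have hsubI : ∀ u ∈ Icc p (T c), u ∈ Icc (0:ℝ) 1 := fun u hu =>
      ⟨hp.1.trans hu.1, hu.2.trans D.c1le⟩
    refine ⟨⟨fun m => if m ≤ n then T^[n-m] v else w (m-n), ?_, ?_⟩, ⟨?_, ?_⟩, ?_⟩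
    · intro m
      dsimp only
      split_ifs
      · exact D.maps.iterate _ (hsubI v hv)
      · exact hsubI _ (hwI _)
    · intro m
      dsimp only
      by_cases h : m + 1 ≤ n
      · rw [if_pos h, if_pos (by omega), ← Function.iterate_succ_apply' T]
        congr 2; omega
      · by_cases h' : m = n
        · subst h'
          simp only [h, if_false, le_refl, if_true, Nat.sub_self, Function.iterate_zero, id]
          rw [show m + 1 - m = 0 + 1 by omega]
          exact (hbr _ _ (hwI 0)).2.1
        · rw [if_neg h, if_neg (by omega), show m + 1 - n = (m - n) + 1 by omega, hws]
          exact (hbr _ _ (hwI _)).2.1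
    · simpa using hv
    · intro m hm
      have : ¬ m ≤ n := by omega
      simp only [this, if_false]
      obtain ⟨k, rfl⟩ : ∃ k, m = n + k + 1 := ⟨m - n - 1, by omega⟩
      rw [show n + k + 1 - n = k + 1 by omega]
      have := hbr (n+k+1) _ (hwI k)
      rw [← hws] at this
      exact ⟨this.1.1, this.2.2⟩
    · simp
  have hinj : ∀ x ∈ Q, ∀ y ∈ Q, x.1 n = y.1 n → x = y := by
    intro x hx y hy h
    have h1 : ∀ k, x.1 (n+k) = y.1 (n+k) := by
      intro k
      induction k with
      | zero => exact h
      | succ k ih =>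
        rw [← step x (n+k), ← step y (n+k)] at ih
        have hx' := hx.2 (n+k+1) (by omega)
        have hy' := hy.2 (n+k+1) (by omega)
        by_cases hsm : s (n+k+1)
        · exact D.mo.injOn ⟨nn x _, hx'.2.1 hsm⟩ ⟨nn y _, hy'.2.1 hsm⟩ ih
        · exact D.an.injOn ⟨hx'.2.2 hsm, (mem x _).2⟩ ⟨hy'.2.2 hsm, (mem y _).2⟩ ih
    ext m
    rw [← iter x m n, ← iter y m n, add_comm m n, h1]
  have hQc : IsClosed Q := by
    have hQ : Q = (fun y : InvLimit T => y.1 n) ⁻¹' (Icc p (T c)) ∩ ⋂ m, ⋂ (_ : m > n),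
        ({y : InvLimit T | p ≤ y.1 m} ∩ ((⋂ _ : s m, {y : InvLimit T | y.1 m ≤ c}) ∩
          ⋂ _ : ¬ s m, {y : InvLimit T | c ≤ y.1 m})) := by
      ext y; simp [Q]
    rw [hQ]
    refine (isClosed_Icc.preimage (contCoord n)).inter ?_
    refine isClosed_iInter fun m => isClosed_iInter fun hm => ?_
    refine (isClosed_le continuous_const (contCoord m)).inter (IsClosed.inter ?_ ?_)
    · exact isClosed_iInter fun _ => isClosed_le (contCoord m) continuous_const
    · exact isClosed_iInter fun _ => isClosed_le continuous_const (contCoord m)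
  have := D.compactX
  have : CompactSpace Q := isCompact_iff_compactSpace.1 hQc.isCompact
  let f : Q → Icc p (T c) := fun y => ⟨y.1.1 n, y.2.1⟩
  have hf : Function.Bijective f := by
    constructor
    · intro x y h
      exact Subtype.ext (hinj x x.2 y y.2 (congrArg Subtype.val h))
    · intro v
      obtain ⟨y, hy, h⟩ := hsurj v v.2
      exact ⟨⟨y, hy⟩, Subtype.ext h⟩
  have hfc : Continuous f := by
    refine Continuous.subtype_mk ?_ _
    exact (contCoord n).comp continuous_subtype_val
  let e : Q ≃ₜ Icc p (T c) := Continuous.homeoOfEquivCompactToT2 (f := Equiv.ofBijective f hf) hfc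
  refine ⟨fun v => (e.symm (projIcc p (T c) hpc1 v)).1,
    continuous_subtype_val.comp (e.symm.continuous.comp continuous_projIcc), ?_⟩
  intro v hv
  dsimp only
  rw [projIcc_of_mem hpc1 hv]
  set q := e.symm ⟨v, hv⟩ with hq
  have h1 : f q = ⟨v, hv⟩ := e.apply_symm_apply ⟨v, hv⟩
  exact ⟨congrArg Subtype.val h1, q.2.2⟩

lemma exists_bet (D : UData T c y1 y2) (n : ℕ) : ∃ b : ℝ → InvLimit T, Continuous b ∧
    ∀ v ∈ Icc 0 (T c), InP T c n (b v) ∧ (b v).1 n = v := by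
  obtain ⟨b, hb, h⟩ := D.chart 0 ⟨le_rfl, D.c0.le⟩ D.T0 (fun _ => True) (by simp) n
  exact ⟨b, hb, fun v hv => ⟨fun m hm => ((h v hv).2 m hm).2.1 trivial, (h v hv).1⟩⟩

end UData

/-- the zero point -/
def zeroPt (T : ℝ → ℝ) (h : T 0 = 0) : InvLimit T :=
  ⟨fun _ => 0, fun _ => ⟨le_rfl, zero_le_one⟩, fun _ => h⟩

def ArcInt {A : Type*} [TopologicalSpace A] (x : A) : Prop :=
  ∃ γ : ℝ → A, Continuous γ ∧ InjOn γ (Icc (-1) 1) ∧ γ 0 = x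

lemma ArcInt.map {A B : Type*} [TopologicalSpace A] [TopologicalSpace B] (φ : A ≃ₜ B) {x : A}
    (h : ArcInt x) : ArcInt (φ x) := by
  obtain ⟨γ, h1, h2, h3⟩ := h
  exact ⟨φ ∘ γ, φ.continuous.comp h1, φ.injective.injOn.comp h2 (mapsTo_univ _ _), by simp [h3]⟩

namespace UData

lemma zero_InP (D : UData T c y1 y2) (n : ℕ) : InP T c n (zeroPt T D.T0) := fun _ _ => D.c0.le

lemma path (D : UData T c y1 y2) (γ : ℝ → InvLimit T) (hγ : Continuous γ) (k : ℕ) (h0 : InP T c k (γ 0)) (L : ℝ)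
    (hL : 0 ≤ L) : ∃ n, ∀ t ∈ Icc 0 L, InP T c n (γ t) := by
  by_contra hcon
  push Not at hcon
  have hcm : ∀ m, Continuous (fun t => (γ t).1 m) := fun m => (contCoord m).comp hγ
  have hT12 : y1 < y2 := D.y1c.trans D.cy2
  have hM : ∀ m ≥ k + 2, (γ 0).1 m < y1 := by
    intro m hm
    by_contra hlt
    push Not at hlt
    obtain ⟨j, rfl⟩ : ∃ j, m = j + 1 := ⟨m - 1, by omega⟩
    have h1 := h0 (j+1) (by omega)
    have h2 := h0 j (by omega)
    have h3 : y2 ≤ (γ 0).1 j := by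
      rw [← D.Ty1, ← step (γ 0) j]
      exact D.mo.monotoneOn ⟨D.y1pos.le, D.y1c.le⟩ ⟨nn _ _, h1⟩ hlt
    linarith [D.cy2]
  let S : ℕ → Set ℝ := fun m => {t ∈ Icc 0 L | (γ t).1 m = y1}
  have hdown : ∀ m ≥ k + 2, ∀ t ∈ Icc 0 L, y1 < (γ t).1 m → ∃ s ∈ S m, s ≤ t := by
    intro m hm t ht h
    obtain ⟨s, hs, h2⟩ := intermediate_value_Icc ht.1 (hcm m).continuousOn
      (show y1 ∈ Icc ((γ 0).1 m) ((γ t).1 m) from ⟨(hM m hm).le, h.le⟩)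
    exact ⟨s, ⟨⟨hs.1, hs.2.trans ht.2⟩, h2⟩, hs.2⟩
  have hstep : ∀ m ≥ k + 2, ∀ t ∈ S (m+1), ∃ s ∈ S m, s ≤ t := by
    intro m hm t ht
    refine hdown m hm t ht.1 ?_
    rw [← step (γ t) m, ht.2, D.Ty1]; exact hT12
  have hne : ∀ m ≥ k + 2, (S m).Nonempty := by
    intro m hm
    obtain ⟨t, ht, h⟩ := hcon m
    simp only [InP] at h
    push Not at h
    obtain ⟨m', hm', h⟩ := h
    obtain ⟨s, hs, _⟩ := hdown m' (by omega) t ht (by linarith [D.y1c])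
    have : ∀ j, (S (m+j)).Nonempty → (S m).Nonempty := by
      intro j
      induction j with
      | zero => exact id
      | succ j ih =>
        rintro ⟨t, ht⟩
        obtain ⟨s, hs, _⟩ := hstep (m+j) (by omega) t ht
        exact ih ⟨s, hs⟩
    refine this (m' - m) ?_
    rw [show m + (m' - m) = m' by omega]; exact ⟨s, hs⟩
  have hSc : ∀ m, IsCompact (S m) := fun m =>
    isCompact_Icc.inter_right (isClosed_eq (hcm m) continuous_const)
  have hleast : ∀ j, ∃ t, IsLeast (S (k+2+j)) t := fun j =>
    (hSc _).exists_isLeast (hne _ (by omega))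
  choose t ht using hleast
  have hmono : Monotone t := by
    refine monotone_nat_of_le_succ fun j => ?_
    obtain ⟨s, hs, h⟩ := hstep (k+2+j) (by omega) (t (j+1)) (ht (j+1)).1
    exact ((ht j).2 hs).trans h
  have hbdd : BddAbove (range t) := ⟨L, by rintro _ ⟨j, rfl⟩; exact (ht j).1.1.2⟩
  have hlim := tendsto_atTop_ciSup hmono hbdd
  have hlim2 := ((hcm (k+2)).tendsto _).comp hlim
  have hy : ∀ j, T^[2*j] y1 = y1 := by
    intro j
    induction j with
    | zero => rfl
    | succ j ih =>
      rw [show 2 * (j+1) = 2*j+1+1 by ring, Function.iterate_succ_apply, Function.iterate_succ_apply,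
        D.Ty1, D.Ty2, ih]
  have hev : ∀ j, (γ (t (2*j))).1 (k+2) = y1 := by
    intro j
    rw [← iter _ (k+2) (2*j), (ht (2*j)).1.2, hy]
  have hod : ∀ j, (γ (t (2*j+1))).1 (k+2) = y2 := by
    intro j
    rw [← iter _ (k+2) (2*j+1), (ht (2*j+1)).1.2, Function.iterate_succ_apply', hy, D.Ty1]
  have h2 : Tendsto (fun j : ℕ => 2 * j) atTop atTop :=
    tendsto_atTop_mono (fun j => by simp only [id]; omega) tendsto_id
  have h3 : Tendsto (fun j : ℕ => 2 * j + 1) atTop atTop :=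
    tendsto_atTop_mono (fun j => by simp only [id]; omega) tendsto_id
  have e1 := tendsto_nhds_unique (hlim2.comp h2) (tendsto_const_nhds.congr fun j => (hev j).symm)
  have e2 := tendsto_nhds_unique (hlim2.comp h3) (tendsto_const_nhds.congr fun j => (hod j).symm)
  linarith

lemma not_arcInt_zero (D : UData T c y1 y2) : ¬ ArcInt (zeroPt T D.T0) := by
  rintro ⟨γ, hc, hinj, h0⟩
  obtain ⟨n, hn⟩ := D.path γ hc 0 (by rw [h0]; exact D.zero_InP 0) 1 zero_le_one
  obtain ⟨m, hm⟩ := D.path (fun t => γ (-t)) (hc.comp continuous_neg) 0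
    (by simp only [neg_zero]; rw [h0]; exact D.zero_InP 0) 1 zero_le_one
  set N := max n m
  have hN : ∀ t ∈ Icc (-1:ℝ) 1, InP T c N (γ t) := by
    intro t ht
    rcases le_total 0 t with h | h
    · exact InP_mono (hn t ⟨h, ht.2⟩) (le_max_left _ _)
    · have := hm (-t) ⟨by linarith, by linarith [ht.1]⟩
      simp only [neg_neg] at this
      exact InP_mono this (le_max_right _ _)
  let f : ℝ → ℝ := fun t => (γ t).1 N
  have hf : Continuous f := (contCoord N).comp hc
  have hfi : InjOn f (Icc (-1) 1) := fun a ha b hb h => hinj ha hb (D.InP_inj (hN a ha) (hN b hb) h)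
  have hf0 : f 0 = 0 := by simp only [f, h0]; rfl
  have hfn : ∀ t, 0 ≤ f t := fun t => nn _ _
  rcases le_total (f 1) (f (-1)) with h | h
  · obtain ⟨s, hs, h2⟩ := intermediate_value_Icc' (show (-1:ℝ) ≤ 0 by norm_num) hf.continuousOn
      (show f 1 ∈ Icc (f 0) (f (-1)) from ⟨by rw [hf0]; exact hfn _, h⟩)
    have := hfi ⟨hs.1, by linarith [hs.2]⟩ ⟨by norm_num, by norm_num⟩ h2
    linarith [hs.2]
  · obtain ⟨s, hs, h2⟩ := intermediate_value_Icc (show (0:ℝ) ≤ 1 by norm_num) hf.continuousOn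
      (show f (-1) ∈ Icc (f 0) (f 1) from ⟨by rw [hf0]; exact hfn _, h⟩)
    have := hfi ⟨by linarith [hs.1], hs.2⟩ ⟨by norm_num, by norm_num⟩ h2
    linarith [hs.1]

lemma arc_of_section (x : InvLimit T) (n : ℕ) (b : ℝ → InvLimit T) (hb : Continuous b) (p q : ℝ)
    (hbn : ∀ v ∈ Icc p q, (b v).1 n = v) (hx : b (x.1 n) = x) (h1 : p < x.1 n) (h2 : x.1 n < q) :
    ArcInt x := by
  set δ := min (x.1 n - p) (q - x.1 n)
  have hδ : 0 < δ := lt_min (by linarith) (by linarith)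
  have hd1 : δ ≤ x.1 n - p := min_le_left _ _
  have hd2 : δ ≤ q - x.1 n := min_le_right _ _
  refine ⟨fun t => b (x.1 n + δ * t), hb.comp (by fun_prop), ?_, by simpa using hx⟩
  have hI : ∀ t ∈ Icc (-1:ℝ) 1, x.1 n + δ * t ∈ Icc p q := by
    intro t ht
    constructor <;> nlinarith [ht.1, ht.2]
  intro s hs t ht h
  have h3 := congrArg (fun y : InvLimit T => y.1 n) h
  simp only [hbn _ (hI s hs), hbn _ (hI t ht)] at h3
  have : δ * s = δ * t := by linarith
  exact mul_left_cancel₀ hδ.ne' this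

lemma arcInt_ray (D : UData T c y1 y2) {x : InvLimit T} {k : ℕ} (hx : InP T c k x) (h0 : x ≠ zeroPt T D.T0) :
    ArcInt x := by
  obtain ⟨b, hb, hbb⟩ := D.exists_bet (k+1)
  have hx' : InP T c (k+1) x := InP_mono hx (by omega)
  have hlt : x.1 (k+1) < T c := (hx (k+1) (by omega)).trans_lt D.hc1
  have hpos : 0 < x.1 (k+1) := by
    refine lt_of_le_of_ne (nn x _) fun h => h0 ?_
    exact D.InP_inj hx' (D.zero_InP _) h.symm
  have hI : x.1 (k+1) ∈ Icc 0 (T c) := ⟨nn _ _, D.lec1 _ _⟩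
  exact arc_of_section x (k+1) b hb 0 (T c) (fun v hv => (hbb v hv).2)
    (D.InP_inj (hbb _ hI).1 hx' (hbb _ hI).2) hpos hlt

lemma dense_ray (D : UData T c y1 y2) (F : Set (InvLimit T)) (hF : IsClosed F) (h : ∀ n x, InP T c n x → x ∈ F)
    (x : InvLimit T) : x ∈ F := by
  choose b hb hbb using D.exists_bet
  have hI : ∀ n, x.1 n ∈ Icc 0 (T c) := fun n => ⟨nn _ _, D.lec1 _ _⟩
  refine hF.mem_of_tendsto (f := fun n => b n (x.1 n)) (b := atTop) ?_
    (Eventually.of_forall fun n => h n _ (hbb n _ (hI n)).1)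
  rw [tendsto_subtype_rng, tendsto_pi_nhds]
  intro m
  refine tendsto_const_nhds.congr' ?_
  filter_upwards [eventually_ge_atTop m] with n hn
  obtain ⟨j, rfl⟩ := Nat.exists_eq_add_of_le hn
  rw [← iter (b _ _) m j, (hbb _ _ (hI _)).2, iter]

lemma map_ray_of_zero (D : UData T c y1 y2) (φ : InvLimit T ≃ₜ InvLimit T) {N k : ℕ}
    (hk : InP T c k (φ (zeroPt T D.T0))) :
    ∃ n, ∀ x, InP T c N x → InP T c n (φ x) := by
  obtain ⟨b, hb, hbb⟩ := D.exists_bet N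
  have hz : b 0 = zeroPt T D.T0 := D.InP_inj (hbb 0 ⟨le_rfl, D.c1pos.le⟩).1 (D.zero_InP _)
    (hbb 0 ⟨le_rfl, D.c1pos.le⟩).2
  obtain ⟨n, hn⟩ := D.path (fun t => φ (b t)) (φ.continuous.comp hb) k (by rw [hz]; exact hk) (T c)
    D.c1pos.le
  refine ⟨n, fun x hx => ?_⟩
  have hI : x.1 N ∈ Icc 0 (T c) := ⟨nn _ _, D.lec1 _ _⟩
  have := hn _ hI
  rwa [D.InP_inj (hbb _ hI).1 hx (hbb _ hI).2] at this

lemma zero_of_map_ray (D : UData T c y1 y2) (φ : InvLimit T ≃ₜ InvLimit T) {N k : ℕ} {x : InvLimit T}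
    (hx : InP T c N x) (hk : InP T c k (φ x)) : ∃ n, InP T c n (φ (zeroPt T D.T0)) := by
  obtain ⟨b, hb, hbb⟩ := D.exists_bet N
  have hz : b 0 = zeroPt T D.T0 := D.InP_inj (hbb 0 ⟨le_rfl, D.c1pos.le⟩).1 (D.zero_InP _)
    (hbb 0 ⟨le_rfl, D.c1pos.le⟩).2
  have hI : x.1 N ∈ Icc 0 (T c) := ⟨nn _ _, D.lec1 _ _⟩
  have hxb : b (x.1 N) = x := D.InP_inj (hbb _ hI).1 hx (hbb _ hI).2
  obtain ⟨n, hn⟩ := D.path (fun t => φ (b (x.1 N - t))) (φ.continuous.comp (hb.comp (by fun_prop)))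
    k (by simp only [sub_zero]; rw [hxb]; exact hk) (x.1 N) hI.1
  have := hn (x.1 N) ⟨hI.1, le_rfl⟩
  simp only [sub_self, hz] at this
  exact ⟨n, this⟩

lemma map_zero (D : UData T c y1 y2) (φ : InvLimit T ≃ₜ InvLimit T) : φ (zeroPt T D.T0) = zeroPt T D.T0 := by
  have hna : ¬ ArcInt (φ (zeroPt T D.T0)) := by
    intro h
    have := h.map φ.symm
    rw [φ.symm_apply_apply] at this
    exact D.not_arcInt_zero this
  suffices h : ∃ n, InP T c n (φ (zeroPt T D.T0)) by
    obtain ⟨n, hn⟩ := h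
    by_contra h0
    exact hna (D.arcInt_ray hn h0)
  have hcI : c ∈ Icc (0:ℝ) 1 := ⟨D.c0.le, D.clt.le⟩
  have hc1I := D.maps hcI
  by_cases hB : ∃ p ∈ Icc 0 c, T p = p ∧ T (T c) ≤ p
  · obtain ⟨p, hp, hpf, hpc⟩ := hB
    by_contra hno
    apply hna
    set x := φ (zeroPt T D.T0)
    have hpc' : p < c := lt_of_le_of_ne hp.2 (by rintro rfl; linarith [D.hc1])
    obtain ⟨n, hn1, hn2⟩ : ∃ n, p < x.1 n ∧ x.1 n < T c := by
      have h1 : ∃ m, c < x.1 m := by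
        by_contra h; push Not at h
        exact hno ⟨0, fun m _ => h m⟩
      obtain ⟨m, hm⟩ := h1
      rcases (D.lec1 x m).lt_or_eq with h | h
      · exact ⟨m, hpc'.trans hm, h⟩
      · have hs := step x m
        rw [h] at hs
        have : x.1 (m+1) = c := by
          rcases lt_trichotomy (x.1 (m+1)) c with h3 | h3 | h3
          · have := D.mo ⟨nn x _, h3.le⟩ ⟨D.c0.le, le_rfl⟩ h3; linarith
          · exact h3
          · have := D.an ⟨le_rfl, D.clt.le⟩ ⟨h3.le, (mem x _).2⟩ h3; linarith
        exact ⟨m+1, by rw [this]; exact hpc', by rw [this]; exact D.hc1⟩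
    have hge : ∀ k, p ≤ x.1 (n+k) := by
      intro k
      induction k with
      | zero => exact hn1.le
      | succ k ih =>
        by_contra hlt; push Not at hlt
        have := D.mo ⟨nn x _, (hlt.trans hpc').le⟩ hp hlt
        have hs := step x (n+k)
        rw [← add_assoc] at this
        linarith
    obtain ⟨b, hb, hbb⟩ := D.chart p hp hpf (fun m => x.1 m ≤ c) (fun m => Or.inr hpc) n
    have hI : x.1 n ∈ Icc p (T c) := ⟨hn1.le, hn2.le⟩
    refine arc_of_section x n b hb p (T c) (fun v hv => (hbb v hv).1) ?_ hn1 hn2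
    obtain ⟨hb1, hb2⟩ := hbb _ hI
    have h1 : ∀ k, (b (x.1 n)).1 (n+k) = x.1 (n+k) := by
      intro k
      induction k with
      | zero => exact hb1
      | succ k ih =>
        rw [← step x (n+k), ← step (b _) (n+k)] at ih
        have hy' := hb2 (n+k+1) (by omega)
        by_cases hsm : x.1 (n+k+1) ≤ c
        · exact D.mo.injOn ⟨nn _ _, hy'.2.1 hsm⟩ ⟨nn x _, hsm⟩ ih
        · exact D.an.injOn ⟨hy'.2.2 hsm, (mem _ _).2⟩ ⟨(not_le.1 hsm).le, (mem x _).2⟩ ih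
    ext m
    rw [← iter (b _) m n, ← iter x m n, add_comm m n, h1]
  · push Not at hB
    have hc2pos : 0 < T (T c) := hB 0 ⟨le_rfl, D.c0.le⟩ D.T0
    have hup : ∀ x ∈ Icc (T (T c)) c, x < T x := by
      intro x hx
      by_contra hlt; push Not at hlt
      have : ContinuousOn (fun x => T x - x) (Icc x c) :=
        (D.cont.mono (Icc_subset_Icc (hc2pos.le.trans hx.1) D.clt.le)).sub continuousOn_id
      obtain ⟨q, hq, hqf⟩ := intermediate_value_Icc hx.2 this
        (show (0:ℝ) ∈ Icc (T x - x) (T c - c) from ⟨by linarith, by linarith [D.hc1]⟩)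
      have hqf' : T q = q := by simpa [sub_eq_zero] using hqf
      have := hB q ⟨by linarith [hx.1, hq.1], hq.2⟩ hqf'
      linarith [hx.1, hq.1]
    have hinv : ∀ x ∈ Icc (T (T c)) (T c), T (T c) ≤ T x := by
      intro x hx
      rcases le_total x c with h | h
      · exact hx.1.trans (hup x ⟨hx.1, h⟩).le
      · exact D.an.antitoneOn ⟨h, hx.2.trans hc1I.2⟩ ⟨D.hc1.le, hc1I.2⟩ hx.2
    have hge : ∀ x : InvLimit T, (∀ n, ¬ InP T c n x) → ∀ m, T (T c) ≤ x.1 m := by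
      intro x hx m
      by_contra hlt; push Not at hlt
      have h1 : ∀ k, x.1 (m+k) < T (T c) := by
        intro k
        induction k with
        | zero => exact hlt
        | succ k ih =>
          by_contra hge; push Not at hge
          have := hinv _ ⟨hge, D.lec1 x _⟩
          rw [← add_assoc, step x] at this
          linarith
      apply hx m
      intro j hj
      obtain ⟨i, rfl⟩ := Nat.exists_eq_add_of_lt hj
      exact (h1 (i+1)).le.trans D.hc2.le
    by_contra hno
    have hF := D.dense_ray {y | T (T c) ≤ (φ y).1 0}
      (isClosed_le continuous_const ((contCoord 0).comp φ.continuous)) (fun N x hx =>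
        hge (φ x) (fun n hn => hno (D.zero_of_map_ray φ hx hn)) 0) (φ.symm (zeroPt T D.T0))
    simp only [mem_ofPred_eq, φ.apply_symm_apply] at hF
    have : (zeroPt T D.T0).1 0 = 0 := rfl
    linarith

/-- homeomorphisms map the ray to itself, preserving order -/
lemma map_ray (D : UData T c y1 y2) (φ : InvLimit T ≃ₜ InvLimit T) (N : ℕ) :
    ∃ n, ∀ x, InP T c N x → InP T c n (φ x) ∧
      ∀ y, InP T c N y → x.1 N < y.1 N → (φ x).1 n < (φ y).1 n := by
  obtain ⟨n, hn⟩ := D.map_ray_of_zero φ (N := N) (k := 0) (by rw [D.map_zero]; exact D.zero_InP 0)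
  obtain ⟨b, hb, hbb⟩ := D.exists_bet N
  have hbx : ∀ x, InP T c N x → b (x.1 N) = x := fun x hx =>
    have hI : x.1 N ∈ Icc 0 (T c) := ⟨nn _ _, D.lec1 _ _⟩
    D.InP_inj (hbb _ hI).1 hx (hbb _ hI).2
  let h : ℝ → ℝ := fun v => (φ (b v)).1 n
  have hz : b 0 = zeroPt T D.T0 := D.InP_inj (hbb 0 ⟨le_rfl, D.c1pos.le⟩).1 (D.zero_InP _)
    (hbb 0 ⟨le_rfl, D.c1pos.le⟩).2
  have h0 : h 0 = 0 := by simp only [h, hz, D.map_zero]; rfl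
  have hcn : Continuous h := (contCoord n).comp (φ.continuous.comp hb)
  have hinj : InjOn h (Icc 0 (T c)) := by
    intro u hu v hv huv
    have h1 := φ.injective (D.InP_inj (hn _ (hbb u hu).1) (hn _ (hbb v hv).1) huv)
    rw [← (hbb u hu).2, ← (hbb v hv).2, h1]
  have hmono : StrictMonoOn h (Icc 0 (T c)) := by
    refine ContinuousOn.strictMonoOn_of_injOn_Icc D.c1pos.le ?_ hcn.continuousOn hinj
    rw [h0]; exact nn _ _
  refine ⟨n, fun x hx => ⟨hn x hx, fun y hy hxy => ?_⟩⟩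
  have := hmono ⟨nn _ _, D.lec1 x N⟩ ⟨nn _ _, D.lec1 y N⟩ hxy
  simpa only [h, hbx x hx, hbx y hy] using this

end UData
end Ray


section Lifts
open Set Filter Topology Complex

/-- two continuous logarithms on a preconnected set differ by a constant -/
lemma log_unique {A : Type*} [TopologicalSpace A] {S : Set A} (hS : IsPreconnected S) {f g : A → ℂ}
    (hf : ContinuousOn f S) (hg : ContinuousOn g S) (h : ∀ a ∈ S, exp (f a) = exp (g a)) :
    ∃ k : ℤ, ∀ a ∈ S, f a = g a + k * (2 * Real.pi * I) := by
  have h1 : ∀ a, ∃ n : ℤ, a ∈ S → f a = g a + n * (2 * Real.pi * I) := by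
    intro a
    by_cases ha : a ∈ S
    · obtain ⟨n, hn⟩ := Complex.exp_eq_exp_iff_exists_int.1 (h a ha)
      exact ⟨n, fun _ => hn⟩
    · exact ⟨0, fun h => absurd h ha⟩
  choose n hn using h1
  have hnc : ContinuousOn n S := by
    rw [Int.isClosedEmbedding_coe_real.isInducing.continuousOn_iff]
    have : ContinuousOn (fun a => (f a - g a).im / (2 * Real.pi)) S :=
      (Complex.continuous_im.comp_continuousOn (hf.sub hg)).div_const _
    refine this.congr fun a ha => ?_
    have hpi : (2 * Real.pi) ≠ 0 := by positivity
    simp only [Function.comp, hn a ha]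
    rw [eq_div_iff hpi]
    simp
  rcases S.eq_empty_or_nonempty with rfl | ⟨a0, ha0⟩
  · exact ⟨0, by simp⟩
  · refine ⟨n a0, fun a ha => ?_⟩
    rw [hS.constant hnc ha0 ha]; exact hn a ha

structure LiftDeg (Φ : ℂ → ℂ) (Λ : ℂ × ℂ → ℂ) (d : ℤ) : Prop where
  cont : Continuous Λ
  lift : ∀ z u, exp (Λ (z, u)) = Φ (z + exp u) - Φ z
  per : ∀ z u, Λ (z, u + 2 * Real.pi * I) = Λ (z, u) + d * (2 * Real.pi * I)
  swap : ∀ z u, Λ (z + exp u, u + Real.pi * I) = Λ (z, u) + d * (Real.pi * I)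

lemma LiftDeg.perInt {Φ : ℂ → ℂ} {Λ : ℂ × ℂ → ℂ} {d : ℤ} (h : LiftDeg Φ Λ d) (z u : ℂ) (m : ℤ) :
    Λ (z, u + m * (2 * Real.pi * I)) = Λ (z, u) + d * m * (2 * Real.pi * I) := by
  induction m using Int.induction_on with
  | zero => simp
  | succ m ih =>
    have := h.per z (u + m * (2 * Real.pi * I))
    push_cast at ih ⊢
    rw [ih] at this
    rw [show u + (m + 1) * (2 * Real.pi * I) = u + m * (2 * Real.pi * I) + 2 * Real.pi * I by ring,
      this]
    ring
  | pred m ih =>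
    have := h.per z (u + (-m - 1) * (2 * Real.pi * I))
    push_cast at ih ⊢
    rw [show u + (-m - 1) * (2 * Real.pi * I) + 2 * Real.pi * I = u + -m * (2 * Real.pi * I) by ring,
      ih] at this
    linear_combination -this

lemma exists_lift (Φ : ℂ → ℂ) (hc : Continuous Φ) (hi : Function.Injective Φ) :
    ∃ Λ d, LiftDeg Φ Λ d := by
  have hne : ∀ z u : ℂ, Φ (z + exp u) - Φ z ≠ 0 := by
    intro z u h
    have := hi (sub_eq_zero.1 h)
    exact exp_ne_zero u (by simp at this)
  have hU : IsSimplyConnected (univ : Set (ℂ × ℂ)) := by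
    have : ContractibleSpace (univ : Set (ℂ × ℂ)) :=
      (Homeomorph.Set.univ (ℂ × ℂ)).contractibleSpace
    exact SimplyConnectedSpace.ofContractible _
  obtain ⟨Λ, hΛ, hexp⟩ := Complex.exists_continuousOn_eqOn_exp_comp hU isOpen_univ
    (g := fun p : ℂ × ℂ => Φ (p.1 + exp p.2) - Φ p.1) (by fun_prop)
    (by rintro ⟨p, -, h⟩; exact hne _ _ h)
  have hΛ' : Continuous Λ := continuousOn_univ.1 hΛ
  have hl : ∀ z u, exp (Λ (z, u)) = Φ (z + exp u) - Φ z := fun z u => hexp (mem_univ (z, u))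
  obtain ⟨k, hk⟩ := log_unique (S := (univ : Set (ℂ × ℂ))) isPreconnected_univ
    (f := fun p => Λ (p.1 + exp p.2, p.2 + Real.pi * I)) (g := fun p => Λ p + Real.pi * I)
    (Continuous.continuousOn (by fun_prop)) (Continuous.continuousOn (by fun_prop)) (by
      rintro ⟨z, u⟩ -
      rw [hl, exp_add, exp_add, exp_pi_mul_I, hl]
      simp)
  have hsw : ∀ z u, Λ (z + exp u, u + Real.pi * I) = Λ (z, u) + (2 * k + 1 : ℤ) * (Real.pi * I) := by
    intro z u
    have := hk (z, u) (mem_univ _)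
    simp only at this
    rw [this]; push_cast; ring
  refine ⟨Λ, 2 * k + 1, hΛ', hl, ?_, hsw⟩
  intro z u
  have h1 := hsw (z + exp u) (u + Real.pi * I)
  rw [exp_add, exp_pi_mul_I, show z + exp u + exp u * -1 = z by ring, hsw] at h1
  rw [show u + 2 * Real.pi * I = u + Real.pi * I + Real.pi * I by ring, h1]
  ring

lemma LiftDeg.deg_unit (Φ : ℂ ≃ₜ ℂ) {Λ : ℂ × ℂ → ℂ} {d : ℤ} (h : LiftDeg Φ Λ d) :
    d = 1 ∨ d = -1 := by
  obtain ⟨Λ', d', h'⟩ := exists_lift Φ.symm Φ.symm.continuous Φ.symm.injective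
  have hΛc := h.cont
  have hΛc' := h'.cont
  have hs := Φ.symm.continuous
  obtain ⟨k, hk⟩ := log_unique (S := (univ : Set (ℂ × ℂ))) isPreconnected_univ
    (f := fun p => Λ (Φ.symm p.1, Λ' p)) (g := fun p => p.2)
    (Continuous.continuousOn (by fun_prop)) (Continuous.continuousOn (by fun_prop)) (by
      rintro ⟨z, u⟩ -
      rw [h.lift, h'.lift]
      simp)
  have e1 := hk (0, 0) (mem_univ _)
  have e2 := hk (0, 0 + 2 * Real.pi * I) (mem_univ _)
  simp only at e1 e2
  rw [h'.per, h.perInt, e1] at e2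
  have hpi : (2 * Real.pi * I : ℂ) ≠ 0 := by simp [Real.pi_ne_zero]
  have e3 : ((d * d' : ℤ) : ℂ) * (2 * Real.pi * I) = (1 : ℤ) * (2 * Real.pi * I) := by
    push_cast; linear_combination e2
  have e4 : d * d' = 1 := by exact_mod_cast mul_right_cancel₀ hpi e3
  exact Int.eq_one_or_neg_one_of_mul_eq_one e4

lemma LiftDeg.bound {Φ : ℂ → ℂ} {Λ : ℂ × ℂ → ℂ} {d : ℤ} (h : LiftDeg Φ Λ d) {Z : Set ℂ}
    (hZ : IsCompact Z) (r M : ℝ) :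
    ∃ C, ∀ z ∈ Z, ∀ u : ℂ, r ≤ u.re → u.re ≤ M → ‖Λ (z, u) - d * u‖ ≤ C := by
  have hΛ := h.cont
  have hK : IsCompact (Z ×ˢ (Icc r M ×ℂ Icc 0 (2 * Real.pi))) :=
    hZ.prod (isCompact_Icc.reProdIm isCompact_Icc)
  obtain ⟨C, hC⟩ := hK.exists_bound_of_continuousOn (f := fun p : ℂ × ℂ => Λ p - d * p.2)
    (Continuous.continuousOn (by fun_prop))
  refine ⟨C, fun z hz u h1 h2 => ?_⟩
  have hpi : 0 < 2 * Real.pi := by positivity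
  set m : ℤ := ⌊u.im / (2 * Real.pi)⌋ with hm
  have hm1 : (m:ℝ) ≤ u.im / (2 * Real.pi) := Int.floor_le _
  have hm2 : u.im / (2 * Real.pi) < m + 1 := Int.lt_floor_add_one _
  rw [le_div_iff₀ hpi] at hm1
  rw [div_lt_iff₀ hpi] at hm2
  have key := hC (z, u + (-m : ℤ) * (2 * Real.pi * I)) ⟨hz, by
    rw [mem_reProdIm]
    constructor
    · simpa using ⟨h1, h2⟩
    · simp only [add_im, mul_im, mem_Icc]
      simp
      constructor <;> nlinarith⟩
  simp only [h.perInt] at key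
  have e : Λ (z, u) + d * ((-m : ℤ) : ℂ) * (2 * Real.pi * I) -
      d * (u + ((-m : ℤ) : ℂ) * (2 * Real.pi * I)) = Λ (z, u) - d * u := by ring
  rwa [e] at key

end Lifts


section Stages
open Set Filter Topology

def KK (T : ℝ → ℝ) (n : ℕ) : Set (ℝ × ℝ) :=
  {p | p.1 ∈ Icc (0:ℝ) 1 ∧ p.2 ∈ Icc (0:ℝ) 1 ∧ ∃ i ≤ n, 1 / ((n:ℝ) + 1) ≤ |T^[i] p.1 - T^[i] p.2|}

lemma KK_compact {T : ℝ → ℝ} (hT : Continuous T) (n : ℕ) : IsCompact (KK T n) := by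
  have : KK T n = (Icc (0:ℝ) 1 ×ˢ Icc (0:ℝ) 1) ∩
      ⋃ i ∈ Finset.range (n+1), {p : ℝ × ℝ | 1 / ((n:ℝ) + 1) ≤ |T^[i] p.1 - T^[i] p.2|} := by
    ext p
    simp only [KK, mem_ofPred_eq, mem_inter_iff, mem_prod, mem_iUnion, Finset.mem_range, exists_prop,
      Nat.lt_succ_iff]
    tauto
  rw [this]
  refine (isCompact_Icc.prod isCompact_Icc).inter_right ?_
  refine isClosed_biUnion_finset fun i _ => isClosed_le continuous_const ?_
  have := hT.iterate i
  fun_prop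

lemma KK_ne {T : ℝ → ℝ} {n : ℕ} {a b : ℝ} (h : (a, b) ∈ KK T n) : a ≠ b := by
  rintro rfl
  obtain ⟨_, _, i, _, h⟩ := h
  simp only [sub_self, abs_zero] at h
  have : (0:ℝ) < 1 / ((n:ℝ) + 1) := by positivity
  linarith

lemma KK_symm {T : ℝ → ℝ} {n : ℕ} {a b : ℝ} (h : (a, b) ∈ KK T n) : (b, a) ∈ KK T n := by
  obtain ⟨h1, h2, i, hi, h⟩ := h
  exact ⟨h2, h1, i, hi, by rw [abs_sub_comm]; exact h⟩

noncomputable def lam (Λ : ℂ × ℂ → ℂ) (a b : ℝ) : ℂ :=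
  Λ (((min a b : ℝ) : ℂ), ((Real.log |b - a| : ℝ) : ℂ))

lemma lam_symm (Λ : ℂ × ℂ → ℂ) (a b : ℝ) : lam Λ a b = lam Λ b a := by
  simp only [lam, min_comm a b, abs_sub_comm a b]

lemma lam_lt (Λ : ℂ × ℂ → ℂ) {a b : ℝ} (h : a < b) :
    lam Λ a b = Λ ((a:ℂ), ((Real.log (b - a) : ℝ) : ℂ)) := by
  simp only [lam, min_eq_left h.le, abs_of_pos (sub_pos.2 h)]

lemma exp_lam {Φ : ℂ → ℂ} {Λ : ℂ × ℂ → ℂ} {d : ℤ} (h : LiftDeg Φ Λ d) {a b : ℝ} (hab : a < b) :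
    Complex.exp (lam Λ a b) = Φ b - Φ a := by
  rw [lam_lt Λ hab, h.lift, ← Complex.ofReal_exp, Real.exp_log (sub_pos.2 hab)]
  push_cast; congr 2; ring

lemma LiftDeg.shift {Φ : ℂ → ℂ} {Λ : ℂ × ℂ → ℂ} {d : ℤ} (h : LiftDeg Φ Λ d) (k : ℤ) :
    LiftDeg Φ (fun p => Λ p - k * (2 * Real.pi * Complex.I)) d := by
  refine ⟨h.cont.sub continuous_const, fun z u => ?_, fun z u => ?_, fun z u => ?_⟩
  · rw [Complex.exp_sub, Complex.exp_int_mul_two_pi_mul_I, h.lift]; simp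
  · rw [h.per]; ring
  · rw [h.swap]; ring

structure Stage (T : ℝ → ℝ) (n : ℕ) where
  Φ : ℂ ≃ₜ ℂ
  Λ : ℂ × ℂ → ℂ
  d : ℤ
  μ : ℝ
  hL : LiftDeg Φ Λ d
  μpos : 0 < μ
  μle : μ ≤ 1
  hμ : ∀ a b : ℝ, (a, b) ∈ KK T n → μ ≤ ‖Φ a - Φ b‖

noncomputable def henon (T : ℝ → ℝ) (hT : Continuous T) (κ : ℝ) (hκ : κ ≠ 0) : ℂ ≃ₜ ℂ where
  toFun z := ((T z.re + z.im : ℝ) : ℂ) + ((κ * z.re : ℝ) : ℂ) * Complex.I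
  invFun w := ((w.im / κ : ℝ) : ℂ) + ((w.re - T (w.im / κ) : ℝ) : ℂ) * Complex.I
  left_inv z := by
    apply Complex.ext <;> simp [mul_div_cancel_left₀ _ hκ]
  right_inv w := by
    apply Complex.ext <;> simp [mul_div_cancel₀ _ hκ]
  continuous_toFun := by fun_prop
  continuous_invFun := by fun_prop

lemma henon_real (T : ℝ → ℝ) (hT : Continuous T) (κ : ℝ) (hκ : κ ≠ 0) (a : ℝ) :
    henon T hT κ hκ a = (T a : ℂ) + ((κ * a : ℝ) : ℂ) * Complex.I := by
  show ((T (a:ℂ).re + (a:ℂ).im : ℝ) : ℂ) + ((κ * (a:ℂ).re : ℝ) : ℂ) * Complex.I = _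
  simp

lemma unif_small {K : Set (ℝ × ℝ)} (hK : IsCompact K) (F : (ℝ × ℝ) × (ℝ × ℝ) → ℂ)
    (hF : ContinuousOn F (K ×ˢ univ)) {η : ℝ} (hη : 0 < η) :
    ∃ δ > 0, ∀ p ∈ K, ∀ t1 t2 : ℝ, |t1| ≤ δ → |t2| ≤ δ → ‖F (p, (t1, t2)) - F (p, (0, 0))‖ ≤ η := by
  have hK2 : IsCompact (K ×ˢ (Icc (-1:ℝ) 1 ×ˢ Icc (-1:ℝ) 1)) :=
    hK.prod (isCompact_Icc.prod isCompact_Icc)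
  have hu := hK2.uniformContinuousOn_of_continuous (hF.mono (prod_mono le_rfl (subset_univ _)))
  rw [Metric.uniformContinuousOn_iff] at hu
  obtain ⟨δ, hδ, h⟩ := hu η hη
  refine ⟨min 1 (δ/2), by positivity, fun p hp t1 t2 h1 h2 => ?_⟩
  have h11 := abs_le.1 (h1.trans (min_le_left _ _))
  have h21 := abs_le.1 (h2.trans (min_le_left _ _))
  have h12 := h1.trans (min_le_right _ _)
  have h22 := h2.trans (min_le_right _ _)
  rw [← dist_eq_norm]
  refine (h (p, (t1, t2)) ⟨hp, ⟨h11, h21⟩⟩ (p, (0, 0)) ⟨hp, ⟨⟨by norm_num, by norm_num⟩, ⟨by norm_num, by norm_num⟩⟩⟩ ?_).le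
  simp only [Prod.dist_eq, dist_self, Real.dist_eq, sub_zero]
  rw [max_lt_iff, max_lt_iff]
  exact ⟨hδ, by linarith, by linarith⟩

open Complex in
lemma Stage.step {T : ℝ → ℝ} (hT : Continuous T) (hm : MapsTo T (Icc 0 1) (Icc 0 1)) {n : ℕ}
    (S : Stage T n) (ε : ℤ) (hε : ε = 1 ∨ ε = -1) :
    ∃ S' : Stage T (n+1), S'.μ ≤ S.μ ∧
      (∀ x ∈ Icc (0:ℝ) 1, ‖S'.Φ x - S.Φ (T x)‖ ≤ (1/2)^(n+3) * S.μ) ∧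
      ∀ a ∈ Icc (0:ℝ) 1, ∀ b ∈ Icc (0:ℝ) 1, (T a, T b) ∈ KK T n →
        ‖lam S'.Λ a b - lam S.Λ (T a) (T b) -
          (if (a - b) * (T a - T b) < 0 then (ε : ℂ) * (Real.pi * I) else 0)‖ ≤ (1/2)^n := by
  have hΛ := S.hL.cont
  have hΦ := S.Φ.continuous
  -- first smallness
  obtain ⟨δ1, hδ1, h1⟩ := unif_small (K := Icc (0:ℝ) 1 ×ˢ Icc (0:ℝ) 1)
    (isCompact_Icc.prod isCompact_Icc)
    (fun q => S.Φ ((q.1.1 : ℂ) + (q.2.1 : ℂ) * I)) (Continuous.continuousOn (by fun_prop))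
    (η := (1/2)^(n+3) * S.μ) (mul_pos (by positivity) S.μpos)
  -- second smallness
  let F : (ℝ × ℝ) × (ℝ × ℝ) → ℂ := fun q =>
    S.Λ ((q.1.1 : ℂ) + (q.2.1 : ℂ) * I, log (((q.1.2 - q.1.1 : ℝ) : ℂ) + ((q.2.2 - q.2.1 : ℝ) : ℂ) * I))
  have hKp : IsCompact (KK T n ∩ {p | p.1 ≤ p.2}) :=
    (KK_compact hT n).inter_right (isClosed_le continuous_fst continuous_snd)
  obtain ⟨δ2, hδ2, h2⟩ := unif_small hKp F (by
    refine hΛ.comp_continuousOn (ContinuousOn.prodMk (Continuous.continuousOn (by fun_prop)) ?_)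
    refine ContinuousOn.clog (Continuous.continuousOn (by fun_prop)) ?_
    rintro ⟨p, t⟩ ⟨⟨hp, hle⟩, -⟩
    left
    have : p.1 < p.2 := lt_of_le_of_ne hle (KK_ne hp)
    simp
    linarith) (η := (1/2)^n) (by positivity)
  have hd := S.hL.deg_unit
  obtain ⟨s, hs, hsε⟩ : ∃ s : ℤ, (s = 1 ∨ s = -1) ∧ S.d * s = ε := by
    rcases hd with hd | hd <;> rcases hε with he | he <;> rw [hd, he]
    · exact ⟨1, by simp⟩
    · exact ⟨-1, by simp⟩
    · exact ⟨-1, by simp⟩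
    · exact ⟨1, by simp⟩
  set κ : ℝ := s * min δ1 δ2 with hκdef
  have hδ : 0 < min δ1 δ2 := lt_min hδ1 hδ2
  have hκ0 : κ ≠ 0 := by
    rcases hs with h | h <;> rw [hκdef, h] <;> push_cast
    · linarith
    · linarith
  have hκabs : |κ| = min δ1 δ2 := by
    rcases hs with h | h <;> rw [hκdef, h] <;> push_cast <;> simp [abs_of_pos hδ]
  have hκx : ∀ x ∈ Icc (0:ℝ) 1, |κ * x| ≤ min δ1 δ2 := by
    intro x hx
    rw [abs_mul, hκabs, abs_of_nonneg hx.1]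
    nlinarith [hx.2]
  let Hn := henon T hT κ hκ0
  let Φ' : ℂ ≃ₜ ℂ := Hn.trans S.Φ
  have hΦ' : ∀ a : ℝ, Φ' a = S.Φ ((T a : ℂ) + ((κ * a : ℝ) : ℂ) * I) := fun a =>
    congrArg S.Φ (henon_real T hT κ hκ0 a)
  obtain ⟨Λ0, d', hL0⟩ := exists_lift Φ' Φ'.continuous Φ'.injective
  have hΛ0 := hL0.cont
  let W : Set (ℝ × ℝ) := {p | p.1 < p.2}
  have hW : IsPreconnected W := by
    refine Convex.isPreconnected ?_
    intro p hp q hq a b ha hb hab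
    simp only [W, mem_ofPred_eq, Prod.fst_add, Prod.snd_add, Prod.smul_fst, Prod.smul_snd,
      smul_eq_mul] at hp hq ⊢
    rcases ha.lt_or_eq with h | h
    · nlinarith
    · have : b = 1 := by linarith
      subst this; rw [← h]; linarith
  let G : ℝ × ℝ → ℂ := fun p => S.Λ ((T p.1 : ℂ) + ((κ * p.1 : ℝ) : ℂ) * I,
    log (((T p.2 - T p.1 : ℝ) : ℂ) + ((κ * p.2 - κ * p.1 : ℝ) : ℂ) * I))
  have him : ∀ a b : ℝ, a < b → κ * b - κ * a ≠ 0 := by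
    intro a b hab h
    rw [← mul_sub] at h
    rcases mul_eq_zero.1 h with h | h
    · exact hκ0 h
    · linarith
  obtain ⟨k, hk⟩ := log_unique hW (f := fun p => lam Λ0 p.1 p.2) (g := G) (by
      have : ContinuousOn (fun p : ℝ × ℝ =>
          Λ0 ((p.1:ℂ), ((Real.log (p.2 - p.1) : ℝ) : ℂ))) W := by
        refine hΛ0.comp_continuousOn (ContinuousOn.prodMk (Continuous.continuousOn (by fun_prop)) ?_)
        refine Complex.continuous_ofReal.comp_continuousOn ?_
        refine ContinuousOn.log (Continuous.continuousOn (by fun_prop)) ?_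
        intro p hp
        have : p.1 < p.2 := hp
        linarith
      exact this.congr fun p hp => lam_lt Λ0 hp) (by
      refine hΛ.comp_continuousOn (ContinuousOn.prodMk (Continuous.continuousOn (by fun_prop)) ?_)
      refine ContinuousOn.clog (Continuous.continuousOn (by fun_prop)) ?_
      intro p hp
      right
      simpa using him p.1 p.2 hp) (by
      intro p hp
      rw [exp_lam hL0 hp, S.hL.lift, Complex.exp_log, hΦ', hΦ']
      · congr 2
        push_cast; ring
      · intro h
        have := congrArg Complex.im h
        simp at this
        have h3 := him p.1 p.2 hp
        exact h3 this)
  let Λ' : ℂ × ℂ → ℂ := fun p => Λ0 p - k * (2 * Real.pi * I)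
  have hL' : LiftDeg Φ' Λ' d' := hL0.shift k
  have hlam : ∀ a b : ℝ, a < b → lam Λ' a b = G (a, b) := by
    intro a b hab
    have := hk (a, b) hab
    have e : lam Λ' a b = lam Λ0 a b - k * (2 * Real.pi * I) := rfl
    rw [e]
    simp only at this
    rw [this]; ring
  obtain ⟨m, hm0, hmm⟩ := (KK_compact hT (n+1)).exists_forall_le'
    (f := fun p => ‖Φ' p.1 - Φ' p.2‖) (a := 0)
    (Continuous.continuousOn (by have := Φ'.continuous; fun_prop)) (by
      rintro ⟨a, b⟩ hab
      have := KK_ne hab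
      rw [norm_pos_iff, sub_ne_zero]
      intro h
      exact this (by exact_mod_cast Φ'.injective h))
  refine ⟨⟨Φ', Λ', d', min m S.μ, hL', lt_min hm0 S.μpos, (min_le_right _ _).trans S.μle,
    fun a b hab => (min_le_left _ _).trans (hmm (a, b) hab)⟩, min_le_right _ _, ?_, ?_⟩
  · intro x hx
    simp only [hΦ']
    have := h1 (T x, T x) ⟨hm hx, hm hx⟩ (κ * x) 0 ((hκx x hx).trans (min_le_left _ _))
      (by simpa using hδ1.le)
    simpa using this
  · -- main estimate
    have key : ∀ a ∈ Icc (0:ℝ) 1, ∀ b ∈ Icc (0:ℝ) 1, a < b → (T a, T b) ∈ KK T n →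
        ‖lam Λ' a b - lam S.Λ (T a) (T b) -
          (if (a - b) * (T a - T b) < 0 then (ε : ℂ) * (Real.pi * I) else 0)‖ ≤ (1/2)^n := by
      intro a ha b hb hab hK
      rw [hlam a b hab]
      have hF0 : ∀ u v : ℝ, u < v → F ((u, v), (0, 0)) = lam S.Λ u v := by
        intro u v huv
        rw [lam_lt _ huv]
        simp only [F]
        rw [Complex.ofReal_log (sub_pos.2 huv).le]
        simp
      rcases lt_or_gt_of_ne (KK_ne hK) with hlt | hlt
      · have hrev : ¬ (a - b) * (T a - T b) < 0 := by nlinarith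
        rw [if_neg hrev, sub_zero, ← hF0 _ _ hlt]
        exact h2 (T a, T b) ⟨hK, hlt.le⟩ (κ * a) (κ * b) ((hκx a ha).trans (min_le_right _ _))
          ((hκx b hb).trans (min_le_right _ _))
      · have hrev : (a - b) * (T a - T b) < 0 := by nlinarith
        rw [if_pos hrev, lam_symm, ← hF0 _ _ hlt]
        have h3 := h2 (T b, T a) ⟨KK_symm hK, hlt.le⟩ (κ * b) (κ * a)
          ((hκx b hb).trans (min_le_right _ _)) ((hκx a ha).trans (min_le_right _ _))
        suffices hG : G (a, b) = F ((T b, T a), (κ * b, κ * a)) + ε * (Real.pi * I) by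
          rw [hG]
          convert h3 using 2
          ring
        simp only [G, F]
        set w : ℂ := ((T b - T a : ℝ) : ℂ) + ((κ * b - κ * a : ℝ) : ℂ) * I with hw
        have hw2 : ((T a - T b : ℝ) : ℂ) + ((κ * a - κ * b : ℝ) : ℂ) * I = -w := by
          rw [hw]; push_cast; ring
        rw [hw2]
        have hwim : w.im = κ * b - κ * a := by simp [hw]
        have hwne : w ≠ 0 := by
          intro h
          rw [h] at hwim
          exact him a b hab (by simpa using hwim.symm)
        have hz : (T a : ℂ) + ((κ * a : ℝ) : ℂ) * I =
            ((T b : ℂ) + ((κ * b : ℝ) : ℂ) * I) + exp (log (-w)) := by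
          rw [Complex.exp_log (neg_ne_zero.2 hwne), hw]; push_cast; ring
        rw [hz]
        set z := (T b : ℂ) + ((κ * b : ℝ) : ℂ) * I
        have hsw := S.hL.swap z (log (-w))
        rw [← hsε]
        rcases hs with h | h
        · have hκp : 0 < κ := by rw [hκdef, h]; simpa using hδ
          have hwp : 0 < w.im := by rw [hwim]; nlinarith
          have hlog : log w = log (-w) + Real.pi * I := by
            simp only [Complex.log, Complex.arg_neg_eq_arg_sub_pi_of_im_pos hwp, norm_neg]
            push_cast; ring
          rw [hlog, hsw, h]; push_cast; ring
        · have hκp : κ < 0 := by rw [hκdef, h]; push_cast; linarith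
          have hwp : w.im < 0 := by rw [hwim]; nlinarith
          have hlog : log w = (log (-w) + Real.pi * I) + (-1 : ℤ) * (2 * Real.pi * I) := by
            simp only [Complex.log, Complex.arg_neg_eq_arg_add_pi_of_im_neg hwp, norm_neg]
            push_cast; ring
          rw [hlog, S.hL.perInt, hsw, h]; push_cast; ring
    intro a ha b hb hK
    have hab : a ≠ b := by rintro rfl; exact KK_ne hK rfl
    rcases lt_or_gt_of_ne hab with h | h
    · exact key a ha b hb h hK
    · have := key b hb a ha h (KK_symm hK)
      rw [lam_symm Λ' b a, lam_symm S.Λ (T b) (T a),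
        show (b - a) * (T b - T a) = (a - b) * (T a - T b) by ring] at this
      exact this

lemma Stage.nonempty {T : ℝ → ℝ} (hT : Continuous T) : Nonempty (Stage T 0) := by
  obtain ⟨Λ, d, hL⟩ := exists_lift (Homeomorph.refl ℂ) continuous_id (Homeomorph.refl ℂ).injective
  refine ⟨⟨Homeomorph.refl ℂ, Λ, d, 1, hL, one_pos, le_rfl, ?_⟩⟩
  rintro a b ⟨_, _, i, hi, h⟩
  obtain rfl : i = 0 := by omega
  simp only [Function.iterate_zero, id, Nat.cast_zero, zero_add, div_one] at h
  simp only [Homeomorph.refl_apply, id]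
  rwa [← Complex.ofReal_sub, Complex.norm_real, Real.norm_eq_abs]

lemma exists_stages {T : ℝ → ℝ} (hT : Continuous T) (hm : MapsTo T (Icc 0 1) (Icc 0 1))
    (ε : ℕ → ℤ) (hε : ∀ n, ε n = 1 ∨ ε n = -1) :
    ∃ S : ∀ n, Stage T n, ∀ n, (S (n+1)).μ ≤ (S n).μ ∧
      (∀ x ∈ Icc (0:ℝ) 1, ‖(S (n+1)).Φ x - (S n).Φ (T x)‖ ≤ (1/2)^(n+3) * (S n).μ) ∧
      ∀ a ∈ Icc (0:ℝ) 1, ∀ b ∈ Icc (0:ℝ) 1, (T a, T b) ∈ KK T n →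
        ‖lam (S (n+1)).Λ a b - lam (S n).Λ (T a) (T b) -
          (if (a - b) * (T a - T b) < 0 then (ε n : ℂ) * (Real.pi * Complex.I) else 0)‖
            ≤ (1/2)^n := by
  obtain ⟨S0⟩ := Stage.nonempty hT
  choose nx hnx using fun (n : ℕ) (S : Stage T n) => S.step hT hm (ε n) (hε n)
  exact ⟨fun n => Nat.rec S0 (fun n S => nx n S) n, fun n => hnx n _⟩

end Stages


section Emb
open Set Filter Topology

def Far (T : ℝ → ℝ) (j : ℕ) (x y : InvLimit T) : Prop :=
  ∃ i ≤ j, 1 / ((j:ℝ) + 1) ≤ |x.1 i - y.1 i|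

def RR (T : ℝ → ℝ) (c : ℝ) (N : ℕ) : Set (InvLimit T × InvLimit T) :=
  {p | InP T c N p.1 ∧ InP T c N p.2 ∧ p.1.1 N < p.2.1 N}

noncomputable def rev {T : ℝ → ℝ} (x y : InvLimit T) (i : ℕ) : ℤ :=
  open Classical in if (x.1 (i+1) - y.1 (i+1)) * (x.1 i - y.1 i) < 0 then 1 else 0

lemma far_KK {T : ℝ → ℝ} {j n : ℕ} (hjn : j ≤ n) {x y : InvLimit T} (h : Far T j x y) :
    (x.1 n, y.1 n) ∈ KK T n := by
  obtain ⟨i, hi, h⟩ := h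
  refine ⟨UData.mem x n, UData.mem y n, n - i, Nat.sub_le _ _, ?_⟩
  have e : n = i + (n - i) := by omega
  have hx := UData.iter x i (n - i)
  have hy := UData.iter y i (n - i)
  rw [← e] at hx hy
  simp only [hx, hy]
  refine le_trans ?_ h
  have : (j:ℝ) ≤ n := by exact_mod_cast hjn
  gcongr

lemma exists_far {T : ℝ → ℝ} {x y : InvLimit T} (h : x ≠ y) : ∃ i j : ℕ, i ≤ j ∧
    1 / ((j:ℝ) + 1) < |x.1 i - y.1 i| := by
  have : ∃ i, x.1 i ≠ y.1 i := by
    by_contra hh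
    push Not at hh
    exact h (Subtype.ext (funext hh))
  obtain ⟨i, hi⟩ := this
  obtain ⟨j, hj⟩ := exists_nat_one_div_lt (abs_pos.2 (sub_ne_zero.2 hi))
  refine ⟨i, max i j, le_max_left _ _, lt_of_le_of_lt ?_ hj⟩
  have : (j:ℝ) ≤ (max i j : ℕ) := by exact_mod_cast le_max_right _ _
  gcongr

lemma far_closed (T : ℝ → ℝ) (j : ℕ) : IsClosed {p : InvLimit T × InvLimit T | Far T j p.1 p.2} := by
  have : {p : InvLimit T × InvLimit T | Far T j p.1 p.2} =
      ⋃ i ∈ Finset.range (j+1), {p | 1 / ((j:ℝ) + 1) ≤ |p.1.1 i - p.2.1 i|} := by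
    ext p
    simp only [Far, mem_ofPred_eq, mem_iUnion, Finset.mem_range, exists_prop, Nat.lt_succ_iff]
  rw [this]
  refine isClosed_biUnion_finset fun i _ => isClosed_le continuous_const ?_
  have := UData.contCoord (T := T) i
  exact ((this.comp continuous_fst).sub (this.comp continuous_snd)).abs

namespace UData
variable {T : ℝ → ℝ} {c y1 y2 : ℝ}

lemma RR_mono (D : UData T c y1 y2) {N M : ℕ} (h : N ≤ M) : RR T c N ⊆ RR T c M := by
  rintro p ⟨h1, h2, h3⟩
  refine ⟨InP_mono h1 h, InP_mono h2 h, ?_⟩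
  obtain ⟨k, rfl⟩ := Nat.exists_eq_add_of_le h
  rwa [D.InP_lt h1 h2]

lemma RR_preconn (D : UData T c y1 y2) (N : ℕ) : IsPreconnected (RR T c N) := by
  obtain ⟨b, hb, hbb⟩ := D.exists_bet N
  let W : Set (ℝ × ℝ) := {p | 0 ≤ p.1 ∧ p.1 < p.2 ∧ p.2 ≤ T c}
  have hW : IsPreconnected W := by
    refine Convex.isPreconnected ?_
    intro p hp q hq a b ha hb hab
    simp only [W, mem_ofPred_eq, Prod.fst_add, Prod.snd_add, Prod.smul_fst, Prod.smul_snd,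
      smul_eq_mul] at hp hq ⊢
    have hb1 : b = 1 - a := by linarith
    refine ⟨by nlinarith [mul_nonneg ha hp.1, mul_nonneg hb hq.1], ?_,
      by subst hb1; nlinarith [mul_nonneg ha (sub_nonneg.2 hp.2.2), mul_nonneg hb (sub_nonneg.2 hq.2.2)]⟩
    rcases ha.lt_or_eq with h | h
    · nlinarith
    · have : b = 1 := by linarith
      subst this; rw [← h]; linarith
  have : RR T c N = (fun p : ℝ × ℝ => (b p.1, b p.2)) '' W := by
    ext ⟨x, y⟩
    constructor
    · rintro ⟨h1, h2, h3⟩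
      refine ⟨(x.1 N, y.1 N), ⟨nn x N, h3, D.lec1 y N⟩, ?_⟩
      simp only [Prod.mk.injEq]
      have hx := hbb (x.1 N) ⟨nn x N, D.lec1 x N⟩
      have hy := hbb (y.1 N) ⟨nn y N, D.lec1 y N⟩
      exact ⟨D.InP_inj hx.1 h1 hx.2, D.InP_inj hy.1 h2 hy.2⟩
    · rintro ⟨⟨u, v⟩, ⟨h1, h2, h3⟩, h⟩
      simp only [Prod.mk.injEq] at h h1 h2 h3
      obtain ⟨rfl, rfl⟩ := h
      have hx := hbb u ⟨h1, by linarith⟩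
      have hy := hbb v ⟨by linarith, h3⟩
      exact ⟨hx.1, hy.1, by simp only [hx.2, hy.2]; exact h2⟩
  rw [this]
  exact hW.image _ (by fun_prop)

lemma RR_norev (D : UData T c y1 y2) {N : ℕ} {x y : InvLimit T} (h : (x, y) ∈ RR T c N) {m : ℕ} (hm : N ≤ m) :
    rev x y m = 0 := by
  have h1 : x.1 m < y.1 m := (D.RR_mono hm h).2.2
  have h2 : x.1 (m+1) < y.1 (m+1) := (D.RR_mono (by omega : N ≤ m+1) h).2.2
  rw [rev, if_neg]
  nlinarith

lemma lam_cont (D : UData T c y1 y2) {m N : ℕ} (hm : N ≤ m) {Λ : ℂ × ℂ → ℂ} (hΛ : Continuous Λ) :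
    ContinuousOn (fun p : InvLimit T × InvLimit T => lam Λ (p.1.1 m) (p.2.1 m)) (RR T c N) := by
  have hcc := UData.contCoord (T := T) m
  have h1 : Continuous fun p : InvLimit T × InvLimit T => p.1.1 m := hcc.comp continuous_fst
  have h2 : Continuous fun p : InvLimit T × InvLimit T => p.2.1 m := hcc.comp continuous_snd
  have : ContinuousOn (fun p : InvLimit T × InvLimit T =>
      Λ (((p.1.1 m : ℝ) : ℂ), ((Real.log (p.2.1 m - p.1.1 m) : ℝ) : ℂ))) (RR T c N) := by
    refine hΛ.comp_continuousOn (ContinuousOn.prodMk (Continuous.continuousOn (by fun_prop)) ?_)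
    refine Complex.continuous_ofReal.comp_continuousOn ?_
    refine ContinuousOn.log (Continuous.continuousOn (by fun_prop)) ?_
    intro p hp
    have := (D.RR_mono hm hp).2.2
    linarith
  exact this.congr fun p hp => lam_lt Λ (D.RR_mono hm hp).2.2

theorem exists_emb (D : UData T c y1 y2) (hTc : Continuous T) (ε : ℕ → ℤ) (hε : ∀ n, ε n = 1 ∨ ε n = -1) :
    ∃ g : InvLimit T → ℂ, Continuous g ∧ Function.Injective g ∧
    ∃ ℓ : InvLimit T × InvLimit T → ℂ, (∀ N, ContinuousOn ℓ (RR T c N)) ∧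
      (∀ N, ∀ p ∈ RR T c N, Complex.exp (ℓ p) = g p.2 - g p.1) ∧
      ∀ j, ∃ B : ℝ, ∀ N, ∀ p ∈ RR T c N, Far T j p.1 p.2 →
        |(ℓ p).im - Real.pi * (∑ i ∈ Finset.range N, ε i * rev p.1 p.2 i : ℤ)| ≤ B := by
  obtain ⟨S, hS⟩ := exists_stages hTc D.maps ε hε
  let f : ℕ → InvLimit T → ℂ := fun n x => (S n).Φ (x.1 n)
  have hμ : Antitone fun n => (S n).μ := antitone_nat_of_succ_le fun n => (hS n).1
  have hf : ∀ n x, dist (f n x) (f (n+1) x) ≤ (1/2)^(n+3) * (S n).μ := by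
    intro n x
    have := (hS n).2.1 (x.1 (n+1)) (mem x _)
    rw [step x] at this
    rwa [dist_comm, dist_eq_norm]
  have hf1 : ∀ x n, dist (f n x) (f (n+1) x) ≤ (1/8) * (1/2)^n := by
    intro x n
    refine (hf n x).trans ?_
    have := (S n).μle
    rw [pow_add]
    nlinarith [pow_pos (show (0:ℝ) < 1/2 by norm_num) n]
  have hlim : ∀ x, ∃ a, Tendsto (fun n => f n x) atTop (𝓝 a) := fun x =>
    cauchySeq_tendsto_of_complete (cauchySeq_of_le_geometric _ _ (by norm_num) (hf1 x))
  choose g hg using hlim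
  have hgu : ∀ x n, dist (f n x) (g x) ≤ (1/4) * (1/2)^n := by
    intro x n
    have := dist_le_of_le_geometric_of_tendsto _ _ (by norm_num) (hf1 x) (hg x) n
    refine this.trans (le_of_eq ?_); ring
  have hgm : ∀ x n, dist (f n x) (g x) ≤ (S n).μ / 4 := by
    intro x n
    have := dist_le_of_le_geometric_of_tendsto₀ (f := fun k => f (n+k) x) (1/2) ((S n).μ/8)
      (by norm_num) (fun k => by
        refine (hf (n+k) x).trans ?_
        have h1 := hμ (show n ≤ n + k by omega)
        simp only at h1
        have h2 : ((1:ℝ)/2)^n ≤ 1 := pow_le_one₀ (by norm_num) (by norm_num)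
        have h3 := pow_pos (show (0:ℝ) < 1/2 by norm_num) k
        have h5 := pow_pos (show (0:ℝ) < 1/2 by norm_num) n
        have h4 := (S (n+k)).μpos
        have h6 : ((1:ℝ)/2)^(n+k+3) ≤ (1/2)^k/8 := by
          rw [pow_add, pow_add]; nlinarith
        have h7 := mul_le_mul h6 h1 h4.le (by positivity)
        refine h7.trans (le_of_eq ?_); ring)
      (a := g x) ((hg x).comp (tendsto_add_atTop_nat n |>.congr fun k => by omega))
    refine this.trans (le_of_eq ?_); ring
  have hgc : Continuous g := by
    refine continuous_of_uniform_approx_of_continuous fun u hu => ?_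
    obtain ⟨δ, hδ, hu⟩ := Metric.mem_uniformity_dist.1 hu
    obtain ⟨n, hn⟩ := exists_pow_lt_of_lt_one hδ (show (1:ℝ)/2 < 1 by norm_num)
    refine ⟨f n, ?_, fun x => hu ?_⟩
    · exact (S n).Φ.continuous.comp
        (Complex.continuous_ofReal.comp (UData.contCoord (T := T) n))
    · rw [dist_comm]
      have := hgu x n
      have := pow_pos (show (0:ℝ) < 1/2 by norm_num) n
      linarith
  have hgi : Function.Injective g := by
    intro x y hxy
    by_contra hne
    obtain ⟨i, j, hij, h⟩ := exists_far hne
    have hF : Far T j x y := ⟨i, hij, h.le⟩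
    have h1 := (S j).hμ _ _ (far_KK le_rfl hF)
    have h2 := hgm x j
    have h3 := hgm y j
    rw [← hxy] at h3
    have h4 := dist_triangle_right (f j x) (f j y) (g x)
    rw [dist_eq_norm] at h4
    have := (S j).μpos
    simp only [f] at h4
    simp only [f] at h2 h3
    linarith
  refine ⟨g, hgc, hgi, ?_⟩
  let L : ℕ → InvLimit T × InvLimit T → ℂ := fun m p => lam (S m).Λ (p.1.1 m) (p.2.1 m)
  have hstep : ∀ j p, Far T j p.1 p.2 → ∀ m ≥ j,
      ‖L (m+1) p - L m p - ((ε m * rev p.1 p.2 m : ℤ) : ℂ) * (Real.pi * Complex.I)‖ ≤ (1/2)^m := by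
    intro j p hp m hm
    have hK := far_KK hm hp
    have := (hS m).2.2 (p.1.1 (m+1)) (mem _ _) (p.2.1 (m+1)) (mem _ _)
      (by rw [step p.1, step p.2]; exact hK)
    rw [step p.1, step p.2] at this
    have e : ((ε m * rev p.1 p.2 m : ℤ) : ℂ) * (Real.pi * Complex.I) =
        (if (p.1.1 (m+1) - p.2.1 (m+1)) * (p.1.1 m - p.2.1 m) < 0
          then (ε m : ℂ) * (Real.pi * Complex.I) else 0) := by
      rw [rev]; split_ifs <;> simp
    rw [e]
    exact this
  have hR : ∀ N, ∀ p ∈ RR T c N, ∀ j, Far T j p.1 p.2 → ∀ m, N ≤ m → j ≤ m → ∀ k,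
      dist (L (m+k) p) (L (m+(k+1)) p) ≤ (1/2)^m * (1/2)^k := by
    intro N p hp j hj m hNm hjm k
    have := hstep j p hj (m+k) (by omega)
    rw [D.RR_norev (x := p.1) (y := p.2) hp (by omega)] at this
    rw [dist_comm, dist_eq_norm, ← pow_add]
    simpa [add_assoc] using this
  have hl : ∀ p : InvLimit T × InvLimit T, ∃ a, (∃ N, p ∈ RR T c N) →
      Tendsto (fun m => L m p) atTop (𝓝 a) := by
    intro p
    by_cases hp : ∃ N, p ∈ RR T c N
    · obtain ⟨N, hp⟩ := hp
      have hne : p.1 ≠ p.2 := by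
        intro h; have := hp.2.2; rw [h] at this; exact lt_irrefl _ this
      obtain ⟨i, j, hij, h⟩ := exists_far hne
      have hF : Far T j p.1 p.2 := ⟨i, hij, h.le⟩
      obtain ⟨a, ha⟩ := cauchySeq_tendsto_of_complete (cauchySeq_of_le_geometric _ _ (by norm_num)
        (hR N p hp j hF (max N j) (le_max_left _ _) (le_max_right _ _)))
      refine ⟨a, fun _ => ?_⟩
      rw [← tendsto_add_atTop_iff_nat (max N j)]
      simpa only [add_comm] using ha
    · exact ⟨0, fun h => absurd h hp⟩
  choose ℓ hℓ using hl
  have hℓd : ∀ N, ∀ p ∈ RR T c N, ∀ j, Far T j p.1 p.2 → ∀ m, N ≤ m → j ≤ m →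
      dist (L m p) (ℓ p) ≤ 2 * (1/2)^m := by
    intro N p hp j hj m hNm hjm
    have ht : Tendsto (fun k => L (m+k) p) atTop (𝓝 (ℓ p)) :=
      (hℓ p ⟨N, hp⟩).comp (tendsto_add_atTop_nat m |>.congr fun k => by omega)
    have := dist_le_of_le_geometric_of_tendsto₀ _ _ (by norm_num) (hR N p hp j hj m hNm hjm) ht
    refine this.trans (le_of_eq ?_); ring
  refine ⟨ℓ, fun N p hp => ?_, fun N p hp => ?_, fun j => ?_⟩
  · have hne : p.1 ≠ p.2 := by
      intro h; have := hp.2.2; rw [h] at this; exact lt_irrefl _ this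
    obtain ⟨i, j, hij, h⟩ := exists_far hne
    refine continuousWithinAt_of_locally_uniform_approx_of_continuousWithinAt hp fun u hu => ?_
    obtain ⟨δ, hδ, hu⟩ := Metric.mem_uniformity_dist.1 hu
    obtain ⟨n, hn⟩ := exists_pow_lt_of_lt_one (half_pos hδ) (show (1:ℝ)/2 < 1 by norm_num)
    let m := max n (max N j)
    have hmn : ((1:ℝ)/2)^m ≤ (1/2)^n :=
      pow_le_pow_of_le_one (by norm_num) (by norm_num) (le_max_left _ _)
    have hNm : N ≤ m := (le_max_left _ _).trans (le_max_right _ _)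
    have hjm : j ≤ m := (le_max_right _ _).trans (le_max_right _ _)
    have hU : IsOpen {q : InvLimit T × InvLimit T | 1 / ((j:ℝ) + 1) < |q.1.1 i - q.2.1 i|} := by
      have hcc := UData.contCoord (T := T) i
      exact isOpen_lt continuous_const
        ((hcc.comp continuous_fst).sub (hcc.comp continuous_snd)).abs
    refine ⟨_, inter_mem (mem_nhdsWithin_of_mem_nhds (hU.mem_nhds h)) self_mem_nhdsWithin,
      L m, D.lam_cont hNm (S m).hL.cont p hp, ?_⟩
    rintro q ⟨hq1, hq2⟩
    refine hu ?_
    have hq1' : 1 / ((j:ℝ) + 1) < |q.1.1 i - q.2.1 i| := hq1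
    have := hℓd N q hq2 j ⟨i, hij, hq1'.le⟩ m hNm hjm
    rw [dist_comm]
    linarith
  · have h1 : Tendsto (fun m => Complex.exp (L m p)) atTop (𝓝 (Complex.exp (ℓ p))) :=
      (Complex.continuous_exp.tendsto _).comp (hℓ p ⟨N, hp⟩)
    have h2 : Tendsto (fun m => f m p.2 - f m p.1) atTop (𝓝 (g p.2 - g p.1)) :=
      (hg p.2).sub (hg p.1)
    refine tendsto_nhds_unique h1 (h2.congr' ?_)
    filter_upwards [eventually_ge_atTop N] with m hm
    exact (exp_lam (S m).hL (D.RR_mono hm hp).2.2).symm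
  · obtain ⟨B, hB⟩ := (KK_compact hTc j).exists_bound_of_continuousOn
      (f := fun q : ℝ × ℝ => lam (S j).Λ q.1 q.2) (by
        have hΛ := (S j).hL.cont
        refine hΛ.comp_continuousOn (ContinuousOn.prodMk (Continuous.continuousOn (by fun_prop)) ?_)
        refine Complex.continuous_ofReal.comp_continuousOn ?_
        refine ContinuousOn.log (Continuous.continuousOn (by fun_prop)) ?_
        rintro ⟨a, b⟩ hq
        have := KK_ne hq
        simpa [sub_eq_zero] using this.symm)
    refine ⟨B + 2 + 2 + Real.pi * j, fun N p hp hF => ?_⟩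
    have hsum : ∀ k, ‖L (j+k) p - L j p -
        ((∑ i ∈ Finset.range k, ε (j+i) * rev p.1 p.2 (j+i) : ℤ) : ℂ) * (Real.pi * Complex.I)‖
          ≤ 2 - 2 * (1/2)^k := by
      intro k
      induction k with
      | zero => simp
      | succ k ih =>
        have h1 := hstep j p hF (j+k) (by omega)
        rw [Finset.sum_range_succ]
        have h2 := norm_add_le _ _ |>.trans (add_le_add ih h1)
        have h3 : ((1:ℝ)/2)^(j+k) ≤ (1/2)^k :=
          pow_le_pow_of_le_one (by norm_num) (by norm_num) (by omega)
        calc _ = _ := by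
              congr 1
              rw [Int.cast_add, ← add_assoc j k 1]
              ring
          _ ≤ _ := h2
          _ ≤ _ := by rw [pow_succ]; linarith
    let M := max N j
    have hd := hℓd N p hp j hF M (le_max_left _ _) (le_max_right _ _)
    have hs := hsum (M - j)
    have hM : j + (M - j) = M := by have : j ≤ M := le_max_right _ _; omega
    rw [hM] at hs
    have hBj : ‖L j p‖ ≤ B := hB (p.1.1 j, p.2.1 j) (far_KK le_rfl hF)
    let e : ℕ → ℤ := fun i => ε i * rev p.1 p.2 i
    have he : ∀ i, |e i| ≤ 1 := by
      intro i
      simp only [e, rev]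
      rcases hε i with h | h <;> rw [h] <;> split_ifs <;> simp
    have hNM : ∑ i ∈ Finset.range M, e i = ∑ i ∈ Finset.range N, e i := by
      refine (Finset.sum_subset (Finset.range_mono (le_max_left _ _)) fun i _ hi => ?_).symm
      simp only [Finset.mem_range, not_lt] at hi
      simp only [e]
      rw [D.RR_norev (x := p.1) (y := p.2) hp hi, mul_zero]
    have hsplit := Finset.sum_range_add e j (M - j)
    rw [hM, hNM] at hsplit
    have hj : |((∑ i ∈ Finset.range j, e i : ℤ) : ℝ)| ≤ j := by
      have h1 : |∑ i ∈ Finset.range j, e i| ≤ j := by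
        refine (Finset.abs_sum_le_sum_abs _ _).trans ((Finset.sum_le_sum fun i _ => he i).trans ?_)
        simp
      exact_mod_cast h1
    have h1 := Complex.abs_im_le_norm (ℓ p - L M p)
    have h2 := (Complex.abs_im_le_norm _).trans hs
    have h3 := (Complex.abs_im_le_norm _).trans hBj
    rw [dist_comm, dist_eq_norm] at hd
    have hpM : ((1:ℝ)/2)^M ≤ 1 := pow_le_one₀ (by norm_num) (by norm_num)
    have hpM2 : (0:ℝ) ≤ (1/2)^(M-j) := by positivity
    have him : ∀ z : ℤ, ((z : ℂ) * (Real.pi * Complex.I)).im = Real.pi * z := by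
      intro z; simp [Complex.mul_im, mul_comm]
    rw [Complex.sub_im, Complex.sub_im, him] at h2
    rw [Complex.sub_im] at h1
    change |(ℓ p).im - Real.pi * ((∑ i ∈ Finset.range N, e i : ℤ) : ℝ)| ≤ _
    change |_ - _ - Real.pi * ((∑ i ∈ Finset.range (M - j), e (j+i) : ℤ) : ℝ)| ≤ _ at h2
    rw [hsplit]
    push_cast at h2 hj ⊢
    have hj2 := mul_le_mul_of_nonneg_left (abs_le.1 hj).2 Real.pi_pos.le
    have hj3 := mul_le_mul_of_nonneg_left (abs_le.1 hj).1 Real.pi_pos.le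
    rw [abs_le] at h1 h2 h3 ⊢
    rw [mul_add]
    constructor <;> nlinarith
end UData
end Emb


section Compare
open Set Filter Topology

structure EmbData (T : ℝ → ℝ) (c : ℝ) (ε : ℕ → ℤ) (g : InvLimit T → ℂ)
    (ℓ : InvLimit T × InvLimit T → ℂ) : Prop where
  gc : Continuous g
  gi : Function.Injective g
  lc : ∀ N, ContinuousOn ℓ (RR T c N)
  le : ∀ N, ∀ p ∈ RR T c N, Complex.exp (ℓ p) = g p.2 - g p.1
  lb : ∀ j, ∃ B : ℝ, ∀ N, ∀ p ∈ RR T c N, Far T j p.1 p.2 →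
        |(ℓ p).im - Real.pi * (∑ i ∈ Finset.range N, ε i * rev p.1 p.2 i : ℤ)| ≤ B

def pl (ε : ℕ → ℤ) (n : ℕ) : ℤ := ∑ i ∈ Finset.range n, max (ε i) 0
def mi (ε : ℕ → ℤ) (n : ℕ) : ℤ := ∑ i ∈ Finset.range n, max (-ε i) 0
def sg (ε : ℕ → ℤ) (n : ℕ) : ℤ := ∑ i ∈ Finset.range n, ε i

lemma rev01 {T : ℝ → ℝ} (x y : InvLimit T) (i : ℕ) : rev x y i = 0 ∨ rev x y i = 1 := by
  rw [rev]; split_ifs <;> simp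

lemma rev_sum_le {T : ℝ → ℝ} (ε : ℕ → ℤ) (x y : InvLimit T) (n : ℕ) :
    -mi ε n ≤ ∑ i ∈ Finset.range n, ε i * rev x y i ∧
    ∑ i ∈ Finset.range n, ε i * rev x y i ≤ pl ε n := by
  constructor
  · rw [mi, ← Finset.sum_neg_distrib]
    refine Finset.sum_le_sum fun i _ => ?_
    rcases rev01 x y i with h | h <;> rw [h] <;> simp <;> omega
  · refine Finset.sum_le_sum fun i _ => ?_
    rcases rev01 x y i with h | h <;> rw [h] <;> simp

namespace UData
variable {T : ℝ → ℝ} {c y1 y2 : ℝ}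

lemma exists_homeo (D : UData T c y1 y2) {g g' : InvLimit T → ℂ} (hg : Continuous g) (hgi : Function.Injective g)
    (hg' : Continuous g') (hgi' : Function.Injective g') (H : ℂ ≃ₜ ℂ)
    (hH : H '' range g = range g') : ∃ φ : InvLimit T ≃ₜ InvLimit T, ∀ x, H (g x) = g' (φ x) := by
  have := D.compactX
  have h1 : ∀ x, ∃ y, g' y = H (g x) := fun x => by
    have : H (g x) ∈ range g' := by rw [← hH]; exact ⟨_, ⟨x, rfl⟩, rfl⟩
    exact this
  choose φ hφ using h1
  have hinj : Function.Injective φ := by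
    intro x y h
    have := hφ x
    rw [h, hφ y] at this
    exact (hgi (H.injective this)).symm
  have hsurj : Function.Surjective φ := by
    intro y
    have : g' y ∈ H '' range g := by rw [hH]; exact ⟨y, rfl⟩
    obtain ⟨_, ⟨x, rfl⟩, h⟩ := this
    exact ⟨x, hgi' (by rw [hφ, h])⟩
  have hemb : IsEmbedding g' := (hg'.isClosedEmbedding hgi').isEmbedding
  have hc : Continuous φ := by
    rw [hemb.continuous_iff]
    exact (H.continuous.comp hg).congr fun x => (hφ x).symm
  refine ⟨Continuous.homeoOfEquivCompactToT2 (f := Equiv.ofBijective φ ⟨hinj, hsurj⟩) hc, ?_⟩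
  intro x
  exact (hφ x).symm

lemma map_RR (D : UData T c y1 y2) (φ : InvLimit T ≃ₜ InvLimit T) (N K : ℕ) :
    ∃ M ≥ K, ∀ p ∈ RR T c N, (φ p.1, φ p.2) ∈ RR T c M := by
  obtain ⟨n, hn⟩ := D.map_ray φ N
  refine ⟨max n K, le_max_right _ _, fun p hp => D.RR_mono (le_max_left _ _) ?_⟩
  exact ⟨(hn _ hp.1).1, (hn _ hp.2.1).1, (hn _ hp.1).2 _ hp.2.1 hp.2.2⟩

lemma RR_ne (D : UData T c y1 y2) : ∃ p, p ∈ RR T c 0 := by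
  obtain ⟨b, hb, hbb⟩ := D.exists_bet 0
  have h0 := hbb 0 ⟨le_rfl, D.c1pos.le⟩
  have h1 := hbb (T c) ⟨D.c1pos.le, le_rfl⟩
  exact ⟨(b 0, b (T c)), h0.1, h1.1, by simp only [h0.2, h1.2]; exact D.c1pos⟩

lemma down (D : UData T c y1 y2) {m k : ℕ} {y z : InvLimit T} (hz : InP T c m z) :
    InP T c (m+k) y → y.1 (m+k) ≤ z.1 (m+k) → InP T c m y := by
  induction k with
  | zero => exact fun h _ => h
  | succ k ih =>
    intro hy hle
    have hzc : z.1 (m+(k+1)) ≤ c := hz _ (by omega)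
    have hyc := hle.trans hzc
    refine ih ?_ ?_
    · intro i hi
      rcases Nat.lt_or_ge (m+(k+1)) i with h | h
      · exact hy _ h
      · have : i = m + (k+1) := by omega
        rw [this]; exact hyc
    · rw [← step y (m+k), ← step z (m+k)]
      exact D.mo.monotoneOn ⟨nn _ _, hyc⟩ ⟨nn _ _, hzc⟩ hle

lemma RR_down (D : UData T c y1 y2) {m M : ℕ} (hmM : m ≤ M) {x y z : InvLimit T} (hxy : (x, y) ∈ RR T c M)
    (hz : InP T c m z) (hle : y.1 M ≤ z.1 M) : (x, y) ∈ RR T c m := by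
  obtain ⟨k, rfl⟩ := Nat.exists_eq_add_of_le hmM
  obtain ⟨h1, h2, h3⟩ := hxy
  simp only at h1 h2 h3
  have hy := D.down hz h2 hle
  have hx := D.down hz h1 (h3.le.trans hle)
  exact ⟨hx, hy, (D.InP_lt hx hy k).1 h3⟩

lemma far_map (D : UData T c y1 y2) (φ : InvLimit T ≃ₜ InvLimit T) (j : ℕ) :
    ∃ j', ∀ x y, Far T j x y → Far T j' (φ x) (φ y) := by
  have := D.compactX
  let U : ℕ → Set (InvLimit T × InvLimit T) := fun m =>
    {p | ∃ i ≤ m, 1 / ((m:ℝ) + 1) < |(φ p.1).1 i - (φ p.2).1 i|}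
  have hU : ∀ m, IsOpen (U m) := by
    intro m
    have : U m = ⋃ i ∈ Finset.range (m+1),
        {p : InvLimit T × InvLimit T | 1 / ((m:ℝ) + 1) < |(φ p.1).1 i - (φ p.2).1 i|} := by
      ext p
      simp only [U, mem_ofPred_eq, mem_iUnion, Finset.mem_range, exists_prop, Nat.lt_succ_iff]
    rw [this]
    refine isOpen_biUnion fun i _ => isOpen_lt continuous_const ?_
    have := UData.contCoord (T := T) i
    exact ((this.comp (φ.continuous.comp continuous_fst)).sub
      (this.comp (φ.continuous.comp continuous_snd))).abs
  have hmono : Monotone U := by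
    rintro m n hmn p ⟨i, hi, h⟩
    refine ⟨i, hi.trans hmn, lt_of_le_of_lt ?_ h⟩
    have : (m:ℝ) ≤ n := by exact_mod_cast hmn
    gcongr
  obtain ⟨j', hj'⟩ := (far_closed T j).isCompact.elim_directed_cover U hU (by
    rintro p ⟨i, hi, h⟩
    have hne : φ p.1 ≠ φ p.2 := by
      intro he
      have he := φ.injective he
      rw [he] at h
      simp only [sub_self, abs_zero] at h
      have : (0:ℝ) < 1 / ((j:ℝ) + 1) := by positivity
      linarith
    obtain ⟨i, j', h1, h2⟩ := exists_far hne
    exact mem_iUnion.2 ⟨j', i, h1, h2⟩) hmono.directed_le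
  refine ⟨j', fun x y h => ?_⟩
  obtain ⟨i, hi, h⟩ := hj' (show (x, y) ∈ {p : InvLimit T × InvLimit T | Far T j p.1 p.2} from h)
  exact ⟨i, hi, h.le⟩

lemma log_compare (D : UData T c y1 y2) {ε ε' : ℕ → ℤ} {g g' : InvLimit T → ℂ} {ℓ ℓ' : InvLimit T × InvLimit T → ℂ}
    (E : EmbData T c ε g ℓ) (E' : EmbData T c ε' g' ℓ') (H : ℂ ≃ₜ ℂ)
    (φ : InvLimit T ≃ₜ InvLimit T) (hφ : ∀ x, H (g x) = g' (φ x)) :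
    ∃ d : ℤ, (d = 1 ∨ d = -1) ∧ ∀ j, ∃ C : ℝ, ∀ N, ∀ p ∈ RR T c N, Far T j p.1 p.2 →
      |(ℓ' (φ p.1, φ p.2)).im - d * (ℓ p).im| ≤ C := by
  have := D.compactX
  obtain ⟨Λ, d, hL⟩ := exists_lift H H.continuous H.injective
  refine ⟨d, hL.deg_unit, fun j => ?_⟩
  have hk : ∀ N, ∃ k : ℤ, ∀ p ∈ RR T c N,
      ℓ' (φ p.1, φ p.2) = Λ (g p.1, ℓ p) + k * (2 * Real.pi * Complex.I) := by
    intro N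
    obtain ⟨M, -, hM⟩ := D.map_RR φ N 0
    refine log_unique (D.RR_preconn N) (f := fun p => ℓ' (φ p.1, φ p.2))
      (g := fun p => Λ (g p.1, ℓ p)) ?_ ?_ ?_
    · exact (E'.lc M).comp (f := fun p : InvLimit T × InvLimit T => (φ p.1, φ p.2))
        (Continuous.continuousOn (by fun_prop)) hM
    · exact hL.cont.comp_continuousOn
        (ContinuousOn.prodMk (E.gc.comp continuous_fst).continuousOn (E.lc N))
    · intro p hp
      rw [E'.le M _ (hM p hp), hL.lift, E.le N p hp, ← hφ, ← hφ]
      congr 2; ring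
  obtain ⟨p0, hp0⟩ := D.RR_ne
  choose k hk using hk
  have hkk : ∀ N, k N = k 0 := by
    intro N
    have h1 := hk 0 p0 hp0
    rw [hk N p0 (D.RR_mono (Nat.zero_le _) hp0)] at h1
    have hpi : (2 * Real.pi * Complex.I : ℂ) ≠ 0 := by simp [Real.pi_ne_zero]
    exact_mod_cast mul_right_cancel₀ hpi (add_left_cancel h1)
  have hK := (far_closed T j).isCompact
  have hgd : Continuous fun p : InvLimit T × InvLimit T => ‖g p.2 - g p.1‖ := by
    have := E.gc
    fun_prop
  obtain ⟨a, ha, hal⟩ := hK.exists_forall_le' (a := 0) hgd.continuousOn (by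
    rintro p ⟨i, hi, h⟩
    rw [norm_pos_iff, sub_ne_zero]
    intro he
    have he := E.gi he
    rw [he] at h
    simp only [sub_self, abs_zero] at h
    have : (0:ℝ) < 1 / ((j:ℝ) + 1) := by positivity
    linarith)
  obtain ⟨b, hb⟩ := hK.exists_bound_of_continuousOn hgd.continuousOn
  obtain ⟨C, hC⟩ := hL.bound (isCompact_range E.gc) (Real.log a) (Real.log b)
  refine ⟨C + |(k 0 : ℝ)| * (2 * Real.pi), fun N p hp hF => ?_⟩
  have hre : Real.exp (ℓ p).re = ‖g p.2 - g p.1‖ := by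
    rw [← E.le N p hp, Complex.norm_exp]
  have h1 : a ≤ ‖g p.2 - g p.1‖ := hal p hF
  have h2 : ‖g p.2 - g p.1‖ ≤ b := by simpa using hb p hF
  have h3 : (ℓ p).re = Real.log ‖g p.2 - g p.1‖ := by rw [← hre, Real.log_exp]
  have h4 := hC (g p.1) ⟨_, rfl⟩ (ℓ p) (by rw [h3]; exact Real.log_le_log ha h1)
    (by rw [h3]; exact Real.log_le_log (ha.trans_le h1) h2)
  have h5 := (Complex.abs_im_le_norm _).trans h4
  rw [hk N p hp, hkk N]
  have e1 : ((k 0 : ℂ) * (2 * Real.pi * Complex.I)).im = k 0 * (2 * Real.pi) := by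
    simp [Complex.mul_im]
  have e2 : ((d : ℂ) * ℓ p).im = d * (ℓ p).im := by simp [Complex.mul_im]
  rw [Complex.sub_im, e2] at h5
  rw [Complex.add_im, e1]
  have h6 := abs_add_le ((Λ (g p.1, ℓ p)).im - d * (ℓ p).im) (k 0 * (2 * Real.pi))
  have h7 : |(k 0 : ℝ) * (2 * Real.pi)| = |(k 0 : ℝ)| * (2 * Real.pi) := by
    rw [abs_mul, abs_of_pos (by positivity : (0:ℝ) < 2 * Real.pi)]
  rw [h7] at h6
  calc _ = _ := by congr 1; ring
    _ ≤ _ := h6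
    _ ≤ _ := by linarith

lemma exists_A (D : UData T c y1 y2) : ∃ A : ℕ → InvLimit T, (∀ n, InP T c n (A (n+1))) ∧
    (∀ n, (A n, A (n+1)) ∈ RR T c n) ∧ (∀ n, |(A n).1 0 - (A (n+1)).1 0| = y2 - y1) ∧
    ∀ n, ∀ i < n, rev (A n) (A (n+1)) i = 1 := by
  have hy1 : y1 ∈ Icc 0 (T c) := ⟨D.y1pos.le, by linarith [D.y1c, D.hc1]⟩
  have hA : ∀ n, ∃ x : InvLimit T, InP T c n x ∧ x.1 n = y1 := by
    intro n
    obtain ⟨b, hb, hbb⟩ := D.exists_bet n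
    exact ⟨b y1, hbb y1 hy1⟩
  choose A hA1 hA2 using hA
  have hP : ∀ n, InP T c n (A (n+1)) := by
    intro n i hi
    rcases Nat.lt_or_ge (n+1) i with h | h
    · exact hA1 (n+1) _ h
    · have : i = n+1 := by omega
      rw [this, hA2]; exact D.y1c.le
  have hn : ∀ n, (A (n+1)).1 n = y2 := by
    intro n
    rw [← step, hA2, D.Ty1]
  have h12 : y1 < y2 := D.y1c.trans D.cy2
  have hco : ∀ n k i, n = i + k → ((A n).1 i = y1 ∧ (A (n+1)).1 i = y2) ∨
      ((A n).1 i = y2 ∧ (A (n+1)).1 i = y1) := by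
    intro n k
    induction k with
    | zero => rintro i h; left; obtain rfl : n = i := by omega
              exact ⟨hA2 _, hn _⟩
    | succ k ih =>
      intro i h
      have := ih (i+1) (by omega)
      rw [← step (A n) i, ← step (A (n+1)) i]
      rcases this with ⟨h1, h2⟩ | ⟨h1, h2⟩
      · right; rw [h1, h2]; exact ⟨D.Ty1, D.Ty2⟩
      · left; rw [h1, h2]; exact ⟨D.Ty2, D.Ty1⟩
  refine ⟨A, hP, fun n => ⟨hA1 n, hP n, ?_⟩, fun n => ?_, fun n i hi => ?_⟩
  · simp only [hA2, hn]; exact h12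
  · rcases hco n n 0 (by omega) with ⟨h1, h2⟩ | ⟨h1, h2⟩
    · rw [h1, h2, abs_of_neg (by linarith)]; ring
    · rw [h1, h2, abs_of_pos (by linarith)]
  · rw [rev, if_pos]
    have h0 : 0 < (y2 - y1) * (y2 - y1) := mul_pos (by linarith) (by linarith)
    rw [← step (A n) i, ← step (A (n+1)) i]
    rcases hco n (n-(i+1)) (i+1) (by omega) with ⟨h1, h2⟩ | ⟨h1, h2⟩
    · rw [h1, h2, D.Ty1, D.Ty2]; nlinarith
    · rw [h1, h2, D.Ty1, D.Ty2]; nlinarith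

theorem compare (D : UData T c y1 y2) {ε ε' : ℕ → ℤ} {g g' : InvLimit T → ℂ} {ℓ ℓ' : InvLimit T × InvLimit T → ℂ}
    (E : EmbData T c ε g ℓ) (E' : EmbData T c ε' g' ℓ') (H : ℂ ≃ₜ ℂ)
    (hH : H '' range g = range g') :
    ∃ d : ℤ, (d = 1 ∨ d = -1) ∧ ∃ C : ℝ, ∀ n m,
      (-(mi ε' m : ℝ) - C ≤ d * (sg ε n : ℝ) ∧ d * (sg ε n : ℝ) ≤ pl ε' m + C) ∨
      (-(mi ε n : ℝ) - C ≤ d * (sg ε' m : ℝ) ∧ d * (sg ε' m : ℝ) ≤ pl ε n + C) := by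
  obtain ⟨φ, hφ⟩ := D.exists_homeo E.gc E.gi E'.gc E'.gi H hH
  obtain ⟨d, hd, hcmp⟩ := D.log_compare E E' H φ hφ
  obtain ⟨A, hA1, hA2, hA3, hA4⟩ := D.exists_A
  have h12 : y1 < y2 := D.y1c.trans D.cy2
  obtain ⟨j0, hj0⟩ := exists_nat_one_div_lt (sub_pos.2 h12)
  have hF0 : ∀ n, Far T j0 (A n) (A (n+1)) := fun n => ⟨0, Nat.zero_le _, by rw [hA3]; exact hj0.le⟩
  obtain ⟨j1, hj1⟩ := D.far_map φ j0
  obtain ⟨j2, hj2⟩ := D.far_map φ.symm j0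
  obtain ⟨B0, hB0⟩ := E.lb j0
  obtain ⟨B2, hB2⟩ := E.lb j2
  obtain ⟨B0', hB0'⟩ := E'.lb j0
  obtain ⟨B1', hB1'⟩ := E'.lb j1
  obtain ⟨C0, hC0⟩ := hcmp j0
  obtain ⟨C2, hC2⟩ := hcmp j2
  have hsum : ∀ (ε : ℕ → ℤ) n, ∑ i ∈ Finset.range n, ε i * rev (A n) (A (n+1)) i = sg ε n := by
    intro ε n
    refine Finset.sum_congr rfl fun i hi => ?_
    rw [hA4 n i (Finset.mem_range.1 hi), mul_one]
  have hpi := Real.pi_pos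
  have hpi1 : (1:ℝ) ≤ Real.pi := by linarith [Real.pi_gt_three]
  refine ⟨d, hd, |B0| + |B2| + |B0'| + |B1'| + |C0| + |C2|, fun n m => ?_⟩
  have a1 := le_abs_self B0
  have a2 := le_abs_self B2
  have a3 := le_abs_self B0'
  have a4 := le_abs_self B1'
  have a5 := le_abs_self C0
  have a6 := le_abs_self C2
  have b1 := abs_nonneg B0
  have b2 := abs_nonneg B2
  have b3 := abs_nonneg B0'
  have b4 := abs_nonneg B1'
  have b5 := abs_nonneg C0
  have b6 := abs_nonneg C2
  set C := |B0| + |B2| + |B0'| + |B1'| + |C0| + |C2| with hCdef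
  have hCpi : C ≤ Real.pi * C := by nlinarith [show 0 ≤ C by positivity]
  obtain ⟨M, hM, hMM⟩ := D.map_RR φ n (m+1)
  have hφA : (φ (A n), φ (A (n+1))) ∈ RR T c M := hMM _ (hA2 n)
  rcases le_or_gt ((φ (A (n+1))).1 M) ((A (m+1)).1 M) with hle | hlt
  · left
    have hR := D.RR_down (by omega : m ≤ M) hφA (hA1 m) hle
    have e1 := hB1' m _ hR (hj1 _ _ (hF0 n))
    have e2 := hC0 n _ (hA2 n) (hF0 n)
    have e3 := hB0 n _ (hA2 n) (hF0 n)
    obtain ⟨e4, e5⟩ := rev_sum_le ε' (φ (A n)) (φ (A (n+1))) m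
    simp only at e1 e2 e3
    rw [hsum] at e3
    have e4' : -(mi ε' m : ℝ) ≤ (∑ i ∈ Finset.range m, ε' i * rev (φ (A n)) (φ (A (n+1))) i : ℤ) := by
      exact_mod_cast e4
    have e5' : ((∑ i ∈ Finset.range m, ε' i * rev (φ (A n)) (φ (A (n+1))) i : ℤ) : ℝ) ≤ pl ε' m := by
      exact_mod_cast e5
    have e6 := mul_le_mul_of_nonneg_left e4' hpi.le
    have e7 := mul_le_mul_of_nonneg_left e5' hpi.le
    rw [abs_le] at e1 e2 e3
    constructor
    · refine le_of_mul_le_mul_left ?_ hpi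
      rcases hd with h | h <;> rw [h] at e2 ⊢ <;> push_cast at e2 ⊢ <;> linarith
    · refine le_of_mul_le_mul_left ?_ hpi
      rcases hd with h | h <;> rw [h] at e2 ⊢ <;> push_cast at e2 ⊢ <;> linarith
  · right
    have hq : (A (m+1), φ (A (n+1))) ∈ RR T c M :=
      ⟨InP_mono (hA1 m) (by omega), hφA.2.1, hlt⟩
    have hq2 : (A m, A (m+1)) ∈ RR T c M := D.RR_mono (by omega) (hA2 m)
    obtain ⟨M', hM', hMM'⟩ := D.map_RR φ.symm M n
    have h1 := hMM' _ hq
    have h2 := hMM' _ hq2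
    simp only [Homeomorph.symm_apply_apply] at h1 h2
    have hR := D.RR_down hM' h2 (hA1 n) h1.2.2.le
    have hF := hj2 _ _ (hF0 m)
    have e1 := hB2 n _ hR hF
    have e2 := hC2 n _ hR hF
    have e3 := hB0' m _ (hA2 m) (hF0 m)
    obtain ⟨e4, e5⟩ := rev_sum_le ε (φ.symm (A m)) (φ.symm (A (m+1))) n
    simp only [Homeomorph.apply_symm_apply] at e1 e2 e3
    rw [hsum] at e3
    have e4' : -(mi ε n : ℝ) ≤
        (∑ i ∈ Finset.range n, ε i * rev (φ.symm (A m)) (φ.symm (A (m+1))) i : ℤ) := by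
      exact_mod_cast e4
    have e5' : ((∑ i ∈ Finset.range n, ε i * rev (φ.symm (A m)) (φ.symm (A (m+1))) i : ℤ) : ℝ)
        ≤ pl ε n := by
      exact_mod_cast e5
    have e6 := mul_le_mul_of_nonneg_left e4' hpi.le
    have e7 := mul_le_mul_of_nonneg_left e5' hpi.le
    rw [abs_le] at e1 e2 e3
    constructor
    · refine le_of_mul_le_mul_left ?_ hpi
      rcases hd with h | h <;> rw [h] at e2 ⊢ <;> push_cast at e2 ⊢ <;> linarith
    · refine le_of_mul_le_mul_left ?_ hpi
      rcases hd with h | h <;> rw [h] at e2 ⊢ <;> push_cast at e2 ⊢ <;> linarith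
end UData
end Compare


section Family
open Set Filter Topology

noncomputable def sgm (x : ℕ → Bool) (i : ℕ) : ℤ :=
  if i % 2 = 0 then 1 else if x (Nat.unpair (i / 2)).1 = true then 1 else -1

noncomputable def eps (x : ℕ → Bool) (n : ℕ) : ℤ := sgm x (Nat.log 100 n)

lemma sgm_unit (x : ℕ → Bool) (i : ℕ) : sgm x i = 1 ∨ sgm x i = -1 := by
  rw [sgm]; split_ifs <;> simp

lemma block_sum (f : ℕ → ℤ) (hf : ∀ i, |f i| ≤ 1) (K L : ℕ) (hKL : K ≤ L) (v : ℤ)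
    (hv : ∀ i, K ≤ i → i < L → f i = v) :
    |∑ i ∈ Finset.range L, f i - ((L:ℤ) - K) * v| ≤ K := by
  rw [← Finset.sum_range_add_sum_Ico f hKL]
  have h1 : ∑ i ∈ Finset.Ico K L, f i = ((L:ℤ) - K) * v := by
    rw [Finset.sum_congr rfl (g := fun _ => v) (fun i hi => by
      rw [Finset.mem_Ico] at hi; exact hv i hi.1 hi.2)]
    simp [Nat.cast_sub hKL]
  rw [h1, add_sub_cancel_right]
  refine (Finset.abs_sum_le_sum_abs _ _).trans ((Finset.sum_le_sum fun i _ => hf i).trans ?_)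
  simp

lemma eps_block (x : ℕ → Bool) (i : ℕ) {v : ℤ} (hv : sgm x i = v) :
    |sg (eps x) (100^(i+1)) - 99 * 100^i * v| ≤ 100^i ∧
    |pl (eps x) (100^(i+1)) - 99 * 100^i * max v 0| ≤ 100^i ∧
    |mi (eps x) (100^(i+1)) - 99 * 100^i * max (-v) 0| ≤ 100^i := by
  have hle : 100^i ≤ 100^(i+1) := Nat.pow_le_pow_right (by norm_num) (by omega)
  have he : ∀ n, 100^i ≤ n → n < 100^(i+1) → eps x n = v := by
    intro n h1 h2
    rw [eps, (Nat.log_eq_iff (Or.inr ⟨by norm_num, ?_⟩)).2 ⟨h1, h2⟩, hv]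
    have : 0 < 100^i := by positivity
    omega
  have hu : ∀ n, eps x n = 1 ∨ eps x n = -1 := fun n => sgm_unit x _
  have e : (((100^(i+1) : ℕ) : ℤ) - ((100^i : ℕ) : ℤ)) = 99 * 100^i := by
    push_cast; ring
  refine ⟨?_, ?_, ?_⟩
  · have := block_sum (eps x) (fun n => by rcases hu n with h | h <;> rw [h] <;> simp) _ _ hle v he
    rw [e] at this
    exact_mod_cast this
  · have := block_sum (fun n => max (eps x n) 0)
      (fun n => by rcases hu n with h | h <;> rw [h] <;> simp) _ _ hle (max v 0)
      (fun n h1 h2 => by simp only [he n h1 h2])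
    rw [e] at this
    exact_mod_cast this
  · have := block_sum (fun n => max (-eps x n) 0)
      (fun n => by rcases hu n with h | h <;> rw [h] <;> simp) _ _ hle (max (-v) 0)
      (fun n h1 h2 => by simp only [he n h1 h2])
    rw [e] at this
    exact_mod_cast this

lemma sgm_diff {x x' : ℕ → Bool} (h : x ≠ x') {d : ℤ} (hd : d = 1 ∨ d = -1) (K : ℕ) :
    ∃ i ≥ K, sgm x i ≠ d * sgm x' i := by
  rcases hd with rfl | rfl
  · obtain ⟨k, hk⟩ := Function.ne_iff.1 h
    refine ⟨2 * Nat.pair k K + 1, by have := Nat.right_le_pair k K; omega, ?_⟩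
    have h1 : (2 * Nat.pair k K + 1) % 2 ≠ 0 := by omega
    have h2 : (2 * Nat.pair k K + 1) / 2 = Nat.pair k K := by omega
    simp only [sgm, if_neg h1, h2, Nat.unpair_pair]
    cases hx : x k <;> cases hx' : x' k <;> simp_all
  · refine ⟨2 * K, by omega, ?_⟩
    simp [sgm]

lemma not_compare {x x' : ℕ → Bool} (h : x ≠ x') {d : ℤ} (hd : d = 1 ∨ d = -1) (C : ℝ)
    (hC : ∀ n m,
      (-(mi (eps x') m : ℝ) - C ≤ d * (sg (eps x) n : ℝ) ∧ d * (sg (eps x) n : ℝ) ≤ pl (eps x') m + C) ∨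
      (-(mi (eps x) n : ℝ) - C ≤ d * (sg (eps x') m : ℝ) ∧ d * (sg (eps x') m : ℝ) ≤ pl (eps x) n + C)) :
    False := by
  obtain ⟨i, hi, hne⟩ := sgm_diff h hd (⌈C⌉₊)
  have hCi : C < 100^i := by
    have h1 : C ≤ (i:ℝ) := (Nat.le_ceil C).trans (by exact_mod_cast hi)
    have h2 : (i:ℝ) < (100:ℝ)^i := by exact_mod_cast Nat.lt_pow_self (by norm_num : 1 < 100)
    linarith
  have hP : (0:ℝ) < 100^i := by positivity
  specialize hC (100^(i+1)) (100^(i+1))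
  have key : ∀ v v' : ℤ, sgm x i = v → sgm x' i = v' → v ≠ d * v' → False := by
    intro v v' hv hv' hvv
    obtain ⟨a1, a2, a3⟩ := eps_block x i hv
    obtain ⟨b1, b2, b3⟩ := eps_block x' i hv'
    have hvu := sgm_unit x i
    have hvu' := sgm_unit x' i
    rw [hv] at hvu
    rw [hv'] at hvu'
    generalize sg (eps x) (100^(i+1)) = s at *
    generalize sg (eps x') (100^(i+1)) = s' at *
    generalize pl (eps x) (100^(i+1)) = p at *
    generalize pl (eps x') (100^(i+1)) = p' at *
    generalize mi (eps x) (100^(i+1)) = q at *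
    generalize mi (eps x') (100^(i+1)) = q' at *
    have cast : ∀ a b : ℤ, |a - 99 * 100^i * b| ≤ 100^i →
        (a:ℝ) - 99 * 100^i * b ≤ 100^i ∧ -(100:ℝ)^i ≤ (a:ℝ) - 99 * 100^i * b := by
      intro a b hab
      have : |(a:ℝ) - 99 * 100^i * b| ≤ 100^i := by exact_mod_cast hab
      rw [abs_le] at this
      exact ⟨this.2, this.1⟩
    have a1 := cast _ _ a1
    have a2 := cast _ _ a2
    have a3 := cast _ _ a3
    have b1 := cast _ _ b1
    have b2 := cast _ _ b2
    have b3 := cast _ _ b3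
    generalize (100:ℝ)^i = P at *
    rcases hd with rfl | rfl <;> rcases hvu with rfl | rfl <;> rcases hvu' with rfl | rfl <;>
      first
      | exact absurd rfl hvv
      | (norm_num at a1 a2 a3 b1 b2 b3 hC
         rcases hC with ⟨h1, h2⟩ | ⟨h1, h2⟩ <;> linarith)
  exact key _ _ rfl rfl hne

def Goal (A : Set (ℕ → ℝ)) : Prop :=
  ∃ S : Set (↥A → ℝ × ℝ), ¬ S.Countable ∧
      (∀ g ∈ S, Topology.IsEmbedding g) ∧
      ∀ g₁ ∈ S, ∀ g₂ ∈ S, g₁ ≠ g₂ → ¬ EquivalentEmbeddings g₁ g₂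

theorem UData.goal {T : ℝ → ℝ} {c y1 y2 : ℝ} (D : UData T c y1 y2) (hTc : Continuous T) :
    Goal (invLimitSet T) := by
  have := D.compactX
  have hex : ∀ x : ℕ → Bool, ∃ g ℓ, EmbData T c (eps x) g ℓ := by
    intro x
    obtain ⟨g, h1, h2, ℓ, h3, h4, h5⟩ := D.exists_emb hTc (eps x) (fun n => sgm_unit x _)
    exact ⟨g, ℓ, h1, h2, h3, h4, h5⟩
  choose g ℓ E using hex
  let e : ℂ ≃ₜ ℝ × ℝ := Complex.equivRealProdCLM.toHomeomorph
  let G : (ℕ → Bool) → InvLimit T → ℝ × ℝ := fun x => e ∘ g x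
  have hG : ∀ x x', x ≠ x' → ¬ EquivalentEmbeddings (G x) (G x') := by
    rintro x x' hne ⟨H, hH⟩
    obtain ⟨d, hd, C, hC⟩ := D.compare (E x) (E x') ((e.trans H).trans e.symm) (by
      simp only [G, range_comp] at hH
      have h1 : (⇑((e.trans H).trans e.symm) : ℂ → ℂ) = e.symm ∘ (H ∘ e) := rfl
      rw [h1, image_comp, image_comp, hH, ← image_comp]
      simp)
    exact not_compare hne hd C hC
  have hrefl : ∀ x, EquivalentEmbeddings (G x) (G x) := fun x => ⟨Homeomorph.refl _, by simp⟩
  have hinj : Function.Injective G := by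
    intro x x' h
    by_contra hne
    exact hG x x' hne (by rw [← h]; exact hrefl x)
  refine ⟨range G, ?_, ?_, ?_⟩
  · intro hc
    have h1 : Countable (ℕ → Bool) := by
      have := hc.preimage_of_injOn (f := G) hinj.injOn
      rw [preimage_range] at this
      exact countable_univ_iff.1 this
    obtain ⟨f, hf⟩ := exists_surjective_nat (ℕ → Bool)
    obtain ⟨n, hn⟩ := hf (fun n => !f n n)
    have := congrFun hn n
    simp at this
  · rintro _ ⟨x, rfl⟩
    exact e.isEmbedding.comp ((E x).gc.isClosedEmbedding (E x).gi).isEmbedding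
  · rintro _ ⟨x, rfl⟩ _ ⟨x', rfl⟩ hne
    exact hG x x' (fun h => hne (by rw [h]))

theorem goal_of_unimodal (T : ℝ → ℝ) (c : ℝ) (hT : IsUnimodal T c)
    (hent : 0 < Dynamics.coverEntropy T (Set.Icc 0 1)) : Goal (invLimitSet T) := by
  obtain ⟨hc1, hc2⟩ := entropy_pos hT hent
  obtain ⟨y1, y2, D⟩ := UData.exists hT hc1 hc2
  let Tt : ℝ → ℝ := IccExtend (zero_le_one (α := ℝ)) ((Icc (0:ℝ) 1).domRestrict T)
  have hTt : Continuous Tt := (continuousOn_iff_continuous_domRestrict.1 D.cont).Icc_extend'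
  have heq : ∀ z ∈ Icc (0:ℝ) 1, Tt z = T z := fun z hz => by
    simp only [Tt, IccExtend_of_mem _ _ hz]; rfl
  have hset : invLimitSet Tt = invLimitSet T := by
    ext x
    constructor
    · rintro ⟨h1, h2⟩
      exact ⟨h1, fun n => by rw [← heq _ (h1 _)]; exact h2 n⟩
    · rintro ⟨h1, h2⟩
      exact ⟨h1, fun n => by rw [heq _ (h1 _)]; exact h2 n⟩
  have hcI : c ∈ Icc (0:ℝ) 1 := ⟨D.c0.le, D.clt.le⟩
  have hmT : ∀ z ∈ Icc (0:ℝ) 1, Tt z ∈ Icc (0:ℝ) 1 := fun z hz => by rw [heq z hz]; exact D.maps hz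
  have D' : UData Tt c y1 y2 := by
    have h0c : Icc 0 c ⊆ Icc (0:ℝ) 1 := Icc_subset_Icc le_rfl D.clt.le
    have hc1' : Icc c 1 ⊆ Icc (0:ℝ) 1 := Icc_subset_Icc D.c0.le le_rfl
    have hy1 : y1 ∈ Icc (0:ℝ) 1 := ⟨D.y1pos.le, by linarith [D.y1c, D.clt]⟩
    have hy2 : y2 ∈ Icc (0:ℝ) 1 := by rw [← D.Ty1]; exact D.maps hy1
    refine ⟨⟨hTt.continuousOn, hmT, ?_, D.c0, D.clt, ?_, ?_⟩, ?_, ?_, D.y1pos, D.y1c, D.cy2, ?_, ?_⟩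
    · rw [heq _ ⟨le_rfl, zero_le_one⟩]; exact D.T0
    · exact D.mo.congr fun z hz => (heq z (h0c hz)).symm
    · exact D.an.congr fun z hz => (heq z (hc1' hz)).symm
    · rw [heq c hcI]; exact hc1
    · rw [heq c hcI, heq _ (D.maps hcI)]; exact hc2
    · rw [heq _ hy1]; exact D.Ty1
    · rw [heq _ hy2]; exact D.Ty2
  rw [← hset]
  exact D'.goal hTt
end Family

/-- If `T` is a unimodal map with positive topological entropy, then there are
uncountably many pairwise non-equivalent embeddings of `X` in the plane. -/
theorem stmt1 (T : ℝ → ℝ) (c : ℝ) (hT : IsUnimodal T c)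
    (hent : 0 < Dynamics.coverEntropy T (Set.Icc 0 1)) :
    ∃ S : Set (InvLimit T → ℝ × ℝ), ¬ S.Countable ∧
      (∀ g ∈ S, Topology.IsEmbedding g) ∧
      ∀ g₁ ∈ S, ∀ g₂ ∈ S, g₁ ≠ g₂ → ¬ EquivalentEmbeddings g₁ g₂ := by
  exact goal_of_unimodal T c hT hent
end
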